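/- Let μ be a dominant integral weight of 𝔤 with μ = μ̄. Then dim((adj(𝔤) ⊗ S²V_μ)^𝔤) = Σ_{j : ⟨μ,α_j∨⟩ > 0} ((1/2)·[ϖ_j ≠ ϖ̄_j] + [ϖ_j = ϖ̄_j]·[V_μ is symplectic]) and dim((adj(𝔤) ⊗ Λ²V_μ)^𝔤) = Σ_{j : ⟨μ,α_j∨⟩ > 0} ((1/2)·[ϖ_j ≠ ϖ̄_j] + [ϖ_j = ϖ̄_j]·[V_μ is orthogonal]), where [P] denotes 1 if the condition P holds and 0 otherwise. -/

import Mathlib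

open scoped TensorProduct Classical
open LieAlgebra LieModule Module

namespace AdjPaper

variable {L : Type} [LieRing L] [LieAlgebra ℂ L]

/-- `χ` is a root of `L` relative to the Cartan subalgebra `H`: a nonzero linear functional
on `H` with nontrivial root space. -/
def IsRoot (H : LieSubalgebra ℂ L) [H.IsCartanSubalgebra] (χ : Module.Dual ℂ H) : Prop :=
  χ ≠ 0 ∧ rootSpace H ⇑χ ≠ ⊥

/-- `t` is the coroot `χ∨` of the root `χ`: it lies in `⁅𝔤_χ, 𝔤_{-χ}⁆` and satisfies
`χ t = 2`. -/
def IsCoroot (H : LieSubalgebra ℂ L) [H.IsCartanSubalgebra] (χ : Module.Dual ℂ H) (t : H) : Prop :=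
  χ t = 2 ∧ ∃ e ∈ rootSpace H ⇑χ, ∃ f ∈ rootSpace H ⇑(-χ), (t : L) = ⁅e, f⁆

/-- `α` enumerates the simple roots of a base of the root system of `(L, H)`. -/
structure IsBase (H : LieSubalgebra ℂ L) [H.IsCartanSubalgebra] {r : ℕ} (α : Fin r → Module.Dual ℂ H) : Prop where
  isRoot : ∀ j, IsRoot H (α j)
  indep : LinearIndependent ℂ α
  pos_neg : ∀ χ : Module.Dual ℂ H, IsRoot H χ →
    (∃ c : Fin r → ℕ, χ = ∑ j, (c j : ℂ) • α j) ∨ (∃ c : Fin r → ℕ, χ = -∑ j, (c j : ℂ) • α j)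

/-- `χ` is a positive root relative to the base `α`. -/
def IsPosRoot (H : LieSubalgebra ℂ L) [H.IsCartanSubalgebra] {r : ℕ} (α : Fin r → Module.Dual ℂ H)
    (χ : Module.Dual ℂ H) : Prop :=
  IsRoot H χ ∧ ∃ c : Fin r → ℕ, χ = ∑ j, (c j : ℂ) • α j

/-- A weight `μ` is dominant integral: all its pairings `⟨μ, α_j∨⟩ = μ (hc j)` with the
simple coroots `hc j` are non-negative integers. -/
def IsDomInt {H : LieSubalgebra ℂ L} {r : ℕ} (hc : Fin r → H) (μ : Module.Dual ℂ H) : Prop :=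
  ∀ j, ∃ n : ℕ, μ (hc j) = (n : ℂ)

/-- `V` is an irreducible `L`-module with highest weight `μ` (relative to the Cartan
subalgebra `H` and the base `α`): it is irreducible and possesses a nonzero vector of
`H`-weight `μ` annihilated by all positive root spaces. -/
def IsHWIrrep (H : LieSubalgebra ℂ L) [H.IsCartanSubalgebra] {r : ℕ} (α : Fin r → Module.Dual ℂ H)
    (μ : Module.Dual ℂ H) (V : Type) [AddCommGroup V] [Module ℂ V]
    [LieRingModule L V] [LieModule ℂ L V] : Prop :=
  IsSimpleOrder (LieSubmodule ℂ L V) ∧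
  ∃ v : V, v ≠ 0 ∧ (∀ x : H, ⁅(x : L), v⁆ = μ x • v) ∧
    ∀ χ : Module.Dual ℂ H, IsPosRoot H α χ → ∀ e ∈ rootSpace H ⇑χ, ⁅e, v⁆ = 0

/-- `W` is isomorphic to the dual representation `V*`: there is a nondegenerate
`𝔤`-invariant pairing `W × V → ℂ`. -/
def IsDualPair (W V : Type) [AddCommGroup W] [Module ℂ W] [LieRingModule L W]
    [AddCommGroup V] [Module ℂ V] [LieRingModule L V] : Prop :=
  ∃ B : W →ₗ[ℂ] V →ₗ[ℂ] ℂ,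
    (∀ w, (∀ v, B w v = 0) → w = 0) ∧ (∀ v, (∀ w, B w v = 0) → v = 0) ∧
    ∀ (x : L) (w : W) (v : V), B ⁅x, w⁆ v + B w ⁅x, v⁆ = 0

/-- `V` is an orthogonal representation: it has a nondegenerate invariant symmetric
bilinear form. -/
def IsOrthogonalRep (V : Type) [AddCommGroup V] [Module ℂ V] [LieRingModule L V] : Prop :=
  ∃ B : V →ₗ[ℂ] V →ₗ[ℂ] ℂ,
    (∀ v w, B v w = B w v) ∧ (∀ v, (∀ w, B v w = 0) → v = 0) ∧
    ∀ (x : L) (v w : V), B ⁅x, v⁆ w + B v ⁅x, w⁆ = 0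

/-- `V` is a symplectic representation: it has a nondegenerate invariant alternating
bilinear form. -/
def IsSymplecticRep (V : Type) [AddCommGroup V] [Module ℂ V] [LieRingModule L V] : Prop :=
  ∃ B : V →ₗ[ℂ] V →ₗ[ℂ] ℂ,
    (∀ v, B v v = 0) ∧ (∀ v, (∀ w, B v w = 0) → v = 0) ∧
    ∀ (x : L) (v w : V), B ⁅x, v⁆ w + B v ⁅x, w⁆ = 0

variable (L) in
/-- The operator on `adj(𝔤) ⊗ V ⊗ V` exchanging the two copies of `V`. -/
noncomputable def swapMap (V : Type) [AddCommGroup V] [Module ℂ V] :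
    (L ⊗[ℂ] (V ⊗[ℂ] V)) →ₗ[ℂ] (L ⊗[ℂ] (V ⊗[ℂ] V)) :=
  LinearMap.lTensor L (TensorProduct.comm ℂ V V).toLinearMap

variable (L) in
/-- The `𝔤`-invariant subspace of `adj(𝔤) ⊗ S²V`, realised inside `adj(𝔤) ⊗ V ⊗ V` as the
invariant vectors fixed by the swap of the two copies of `V`. -/
noncomputable def symSquareInvariants (V : Type) [AddCommGroup V] [Module ℂ V]
    [LieRingModule L V] [LieModule ℂ L V] : Submodule ℂ (L ⊗[ℂ] (V ⊗[ℂ] V)) :=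
  (maxTrivSubmodule ℂ L (L ⊗[ℂ] (V ⊗[ℂ] V)) : Submodule ℂ (L ⊗[ℂ] (V ⊗[ℂ] V))) ⊓
    LinearMap.ker (swapMap L V - LinearMap.id)

variable (L) in
/-- The `𝔤`-invariant subspace of `adj(𝔤) ⊗ Λ²V`, realised inside `adj(𝔤) ⊗ V ⊗ V` as the
invariant vectors anti-fixed by the swap of the two copies of `V`. -/
noncomputable def altSquareInvariants (V : Type) [AddCommGroup V] [Module ℂ V]
    [LieRingModule L V] [LieModule ℂ L V] : Submodule ℂ (L ⊗[ℂ] (V ⊗[ℂ] V)) :=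
  (maxTrivSubmodule ℂ L (L ⊗[ℂ] (V ⊗[ℂ] V)) : Submodule ℂ (L ⊗[ℂ] (V ⊗[ℂ] V))) ⊓
    LinearMap.ker (swapMap L V + LinearMap.id)

/-!
Let `v` and `u` be a highest and a lowest weight vector of `V = V_μ`, of weights `μ` and `-μ`, and
let `B` be the invariant form on `V`, so that `B (a, b) = z B (b, a)` with `z = 1` in the orthogonal
and `z = -1` in the symplectic case. The Killing form and `B` turn invariants of `𝔤 ⊗ V ⊗ V` into
invariant functionals `θ`.

Since `𝔤`, `v` and `u` generate everything, `θ` is determined by its values at `h ⊗ v ⊗ u`, `h ∈ 𝔥`,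
and these vanish at `h = α_j∨` if `⟨μ, α_j∨⟩ = 0`. If `⟨μ, α_j∨⟩ > 0`, then `V` occurs in
`T = V_{ϖ_j} ⊗ S`, with `S` a tensor product of fundamental representations, and dually in `T*`; the
operators `x ⊗ id` on `T` with `x ∈ 𝔤` have matrix coefficients `θ_j` with
`θ_j (h ⊗ v ⊗ u) = ϖ_j h`. Hence the values at `α_j∨ ⊗ v ⊗ u` are coordinates on the space of
invariants, and its dimension is the number of `j` with `⟨μ, α_j∨⟩ > 0`.

Comparing Casimir eigenvalues, the lowest weight vector of `V ⊆ T` is the tensor product of the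
lowest weight vectors of the factors, and `h ⊗ id` acts on it by `-ϖ̄_j h`. So
`θ_j (h ⊗ u ⊗ v) = -z ϖ̄_j h`, and the diagonal entry at `j` of the swap in these coordinates is
`-z [ϖ_j = ϖ̄_j]`. The trace of an involution gives the dimensions of its eigenspaces.
-/

section Roots

open LieAlgebra.IsKilling

variable {H : LieSubalgebra ℂ L} {r : ℕ} {α : Fin r → Module.Dual ℂ H}

/-- The element `∑ j, c j • α j` of the monoid spanned by the simple roots. -/
noncomputable def rootSum (α : Fin r → Module.Dual ℂ H) :
    (Fin r → ℕ) →+ Module.Dual ℂ H where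
  toFun c := ∑ j, (c j : ℂ) • α j
  map_zero' := by simp
  map_add' c d := by simp [add_smul, Finset.sum_add_distrib]

lemma rootSum_apply (c : Fin r → ℕ) : rootSum α c = ∑ j, (c j : ℂ) • α j := rfl

variable [H.IsCartanSubalgebra]

lemma IsBase.rootSum_injective (hα : IsBase H α) : Function.Injective (rootSum α) := by
  intro c d hcd
  have hzero := Fintype.linearIndependent_iff.mp hα.indep (fun j ↦ (c j : ℂ) - d j) (by
    simpa only [sub_smul, Finset.sum_sub_distrib, rootSum_apply] using sub_eq_zero.mpr hcd)
  ext j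
  exact_mod_cast sub_eq_zero.mp (hzero j)

lemma IsBase.rootSum_eq_zero_iff (hα : IsBase H α) {c : Fin r → ℕ} :
    rootSum α c = 0 ↔ c = 0 :=
  map_eq_zero_iff _ hα.rootSum_injective

lemma IsPosRoot.exists_rootSum {χ : Module.Dual ℂ H} (hχ : IsPosRoot H α χ) :
    ∃ c, c ≠ 0 ∧ χ = rootSum α c := by
  obtain ⟨hroot, c, rfl⟩ := hχ
  refine ⟨c, ?_, rfl⟩
  rintro rfl
  exact hroot.1 (map_zero (rootSum α))

lemma IsBase.isPosRoot_simple (hα : IsBase H α) (j : Fin r) : IsPosRoot H α (α j) :=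
  ⟨hα.isRoot j, Pi.single j 1, by simp [Pi.single_apply]⟩

lemma IsCoroot.neg {χ : Module.Dual ℂ H} {t : H} (ht : IsCoroot H χ t) :
    IsCoroot H (-χ) (-t) := by
  obtain ⟨htwo, e, he, f, hf, hef⟩ := ht
  refine ⟨by simpa using htwo, f, hf, e, by simpa using he, ?_⟩
  rw [← lie_skew, ← hef]
  simp

variable [FiniteDimensional ℂ L]

lemma isRoot_weight_toLinear (χ : Weight ℂ H L) (hχ : χ.IsNonZero) :
    IsRoot H (Weight.toLinear ℂ H L χ) :=
  ⟨by simpa using hχ, χ.genWeightSpace_ne_bot⟩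

lemma IsRoot.exists_weight {χ : Module.Dual ℂ H} (hχ : IsRoot H χ) :
    ∃ ψ : Weight ℂ H L, ψ.IsNonZero ∧ Weight.toLinear ℂ H L ψ = χ :=
  ⟨⟨χ, hχ.2⟩, fun h ↦ hχ.1 (DFunLike.coe_injective h), rfl⟩

variable [IsKilling ℂ L]

lemma IsRoot.neg {χ : Module.Dual ℂ H} (hχ : IsRoot H χ) : IsRoot H (-χ) := by
  obtain ⟨ψ, hψ, rfl⟩ := hχ.exists_weight
  exact isRoot_weight_toLinear (-ψ) hψ.neg

lemma isPosRoot_neg_base_iff {χ : Module.Dual ℂ H} :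
    IsPosRoot H (-α) χ ↔ IsPosRoot H α (-χ) := by
  constructor
  · rintro ⟨hχ, c, rfl⟩
    exact ⟨hχ.neg, c, by simp⟩
  · rintro ⟨hχ, c, hc⟩
    exact ⟨by simpa using hχ.neg, c, by rw [← neg_neg χ, hc]; simp⟩

lemma IsBase.neg (hα : IsBase H α) : IsBase H (-α) where
  isRoot j := (hα.isRoot j).neg
  indep := by
    convert hα.indep.units_smul (fun _ ↦ (-1 : ℂˣ)) using 1
    ext j x
    simp
  pos_neg χ hχ := by
    rcases hα.pos_neg χ hχ with ⟨c, rfl⟩ | ⟨c, rfl⟩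
    · exact .inr ⟨c, by simp⟩
    · exact .inl ⟨c, by simp⟩

lemma IsBase.eq_top_of_rootSpaces_le (hα : IsBase H α) {P : Submodule ℂ L}
    (hzero : ∀ h : H, (h : L) ∈ P)
    (hpos : ∀ χ, IsPosRoot H α χ → ∀ e ∈ rootSpace H ⇑χ, e ∈ P)
    (hneg : ∀ χ, IsPosRoot H α χ → ∀ f ∈ rootSpace H ⇑(-χ), f ∈ P) : P = ⊤ := by
  have hdecomp := congrArg (fun N : LieSubmodule ℂ H L ↦ (N : Submodule ℂ L))
    (cartan_sup_iSup_rootSpace_eq_top (K := ℂ) (L := L) (H := H))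
  simp only [LieSubmodule.sup_toSubmodule, LieSubmodule.iSup_toSubmodule,
    LieSubmodule.top_toSubmodule] at hdecomp
  rw [← top_le_iff, ← hdecomp]
  refine sup_le (fun y hy ↦ hzero ⟨y, by simpa using hy⟩)
    (iSup_le fun χ ↦ iSup_le fun hχ y hy ↦ ?_)
  have hroot := isRoot_weight_toLinear χ hχ
  rcases hα.pos_neg _ hroot with ⟨c, hc⟩ | ⟨c, hc⟩
  · exact hpos _ ⟨hroot, c, hc⟩ y hy
  · exact hneg (-Weight.toLinear ℂ H L χ) ⟨hroot.neg, c, by rw [hc, neg_neg]⟩ y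
      (by simpa using hy)

end Roots

section WeightSpaces

open LieAlgebra.IsKilling

variable {H : LieSubalgebra ℂ L}
variable {W W' : Type*} [AddCommGroup W] [Module ℂ W] [LieRingModule L W] [LieModule ℂ L W]
  [AddCommGroup W'] [Module ℂ W'] [LieRingModule L W'] [LieModule ℂ L W']

variable (H W) in
/-- The space of vectors of weight `χ`. It is a plain subspace cut out by the action of `L`, so
that no second `H`-module structure has to be compared with the one on tensor products. -/
def weightSubmodule (χ : Module.Dual ℂ H) : Submodule ℂ W where
  carrier := {w | ∀ h : H, ⁅(h : L), w⁆ = χ h • w}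
  add_mem' hv hw h := by rw [lie_add, hv h, hw h, smul_add]
  zero_mem' h := by simp
  smul_mem' c w hw h := by rw [lie_smul, hw h, smul_comm]

lemma mem_weightSubmodule {χ : Module.Dual ℂ H} {w : W} :
    w ∈ weightSubmodule H W χ ↔ ∀ h : H, ⁅(h : L), w⁆ = χ h • w := Iff.rfl

lemma map_mem_weightSubmodule (φ : W →ₗ⁅ℂ,L⁆ W') {χ : Module.Dual ℂ H} {w : W}
    (hw : w ∈ weightSubmodule H W χ) : φ w ∈ weightSubmodule H W' χ := by
  intro h
  rw [← LieModuleHom.map_lie, hw h, map_smul]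

variable [H.IsCartanSubalgebra] {r : ℕ} {α : Fin r → Module.Dual ℂ H}

variable (H W) in
lemma iSupIndep_weightSubmodule : iSupIndep (weightSubmodule H W) := by
  have hindep := (LieSubmodule.iSupIndep_toSubmodule.mpr
    (iSupIndep_genWeightSpace ℂ H W)).comp (f := fun χ : Module.Dual ℂ H ↦ (⇑χ : H → ℂ))
    DFunLike.coe_injective
  exact hindep.mono fun χ w hw ↦ weightSpace_le_genWeightSpace W χ ((mem_weightSpace _ _).mpr hw)

lemma eq_zero_of_mem_weightSubmodule_of_mem_iSup {ι : Sort*} (f : ι → Module.Dual ℂ H)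
    {χ : Module.Dual ℂ H} (hχ : ∀ i, f i ≠ χ) {w : W} (hw : w ∈ weightSubmodule H W χ)
    (hw' : w ∈ ⨆ i, weightSubmodule H W (f i)) : w = 0 := by
  have hle : ⨆ i, weightSubmodule H W (f i) ≤ ⨆ ψ, ⨆ _ : ψ ≠ χ, weightSubmodule H W ψ :=
    iSup_le fun i ↦ le_iSup₂_of_le (f i) (hχ i) le_rfl
  exact Submodule.disjoint_def.mp (iSupIndep_weightSubmodule H W χ) w hw (hle hw')

/-- `v` is a highest weight vector of weight `μ` for the base `α`. Lowest weight vectors are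
highest weight vectors for the base `-α`. -/
structure IsHighestWeightVector (H : LieSubalgebra ℂ L) [H.IsCartanSubalgebra]
    (α : Fin r → Module.Dual ℂ H) (μ : Module.Dual ℂ H) (v : W) : Prop where
  ne_zero : v ≠ 0
  mem_weightSubmodule : v ∈ weightSubmodule H W μ
  lie_eq_zero : ∀ χ, IsPosRoot H α χ → ∀ e ∈ rootSpace H ⇑χ, ⁅e, v⁆ = 0

namespace IsHighestWeightVector

lemma map {μ : Module.Dual ℂ H} {v : W} (hv : IsHighestWeightVector H α μ v)
    {φ : W →ₗ⁅ℂ,L⁆ W'} (hφ : φ v ≠ 0) : IsHighestWeightVector H α μ (φ v) where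
  ne_zero := hφ
  mem_weightSubmodule := map_mem_weightSubmodule φ hv.mem_weightSubmodule
  lie_eq_zero χ hχ e he := by rw [← LieModuleHom.map_lie, hv.lie_eq_zero χ hχ e he, map_zero]

end IsHighestWeightVector

variable [FiniteDimensional ℂ L] [IsKilling ℂ L]

lemma lie_mem_weightSubmodule {χ ψ : Module.Dual ℂ H} {e : L} {w : W}
    (he : e ∈ rootSpace H ⇑χ) (hw : w ∈ weightSubmodule H W ψ) :
    ⁅e, w⁆ ∈ weightSubmodule H W (ψ + χ) := by
  intro h
  have hhe : ⁅(h : L), e⁆ = χ h • e := lie_eq_smul_of_mem_rootSpace he h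
  rw [leibniz_lie, hhe, hw h, lie_smul, smul_lie, LinearMap.add_apply, add_smul,
    add_comm]

lemma IsHighestWeightVector.lie_eq_zero_of_neg {l : Module.Dual ℂ H} {u : W}
    (hu : IsHighestWeightVector H (-α) l u) {χ : Module.Dual ℂ H} (hχ : IsPosRoot H α χ)
    {f : L} (hf : f ∈ rootSpace H ⇑(-χ)) : ⁅f, u⁆ = 0 :=
  hu.lie_eq_zero (-χ) (isPosRoot_neg_base_iff.mpr (by rwa [neg_neg])) f hf

lemma IsBase.exists_isHighestWeightVector (hα : IsBase H α) [FiniteDimensional ℂ W]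
    [Nontrivial W] : ∃ (μ : Module.Dual ℂ H) (v : W), IsHighestWeightVector H α μ v := by
  obtain ⟨χ, hχ⟩ := exists_nontrivial_weightSpace_of_isNilpotent ℂ H W
  let weightAbove (c : Fin r → ℕ) : Submodule ℂ W := weightSubmodule H W (χ + rootSum α c)
  have hfin : {c | weightAbove c ≠ ⊥}.Finite :=
    WellFoundedGT.finite_ne_bot_of_iSupIndep <| (iSupIndep_weightSubmodule H W).comp
      ((add_right_injective _).comp hα.rootSum_injective)
  obtain ⟨w, hw⟩ := exists_ne (0 : weightSpace W χ)
  have hne : {c | weightAbove c ≠ ⊥}.Nonempty := by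
    refine ⟨0, (Submodule.ne_bot_iff _).mpr ⟨w, fun h ↦ ?_, by simpa using hw⟩⟩
    simpa using (mem_weightSpace _ _).mp w.2 h
  -- a weight `χ + ∑ j, c j • α j` with `c` maximal cannot be raised
  obtain ⟨c, hc, hmax⟩ := hfin.exists_maximal hne
  obtain ⟨v, hv, hv0⟩ := (Submodule.ne_bot_iff _).mp hc
  refine ⟨_, v, hv0, hv, fun ψ hψ e he ↦ by_contra fun hev ↦ ?_⟩
  obtain ⟨d, hd, rfl⟩ := hψ.exists_rootSum
  have hraised : ⁅e, v⁆ ∈ weightAbove (c + d) := by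
    simpa only [weightAbove, map_add, add_assoc] using lie_mem_weightSubmodule he hv
  have hle := hmax ((Submodule.ne_bot_iff _).mpr ⟨_, hraised, hev⟩) le_self_add
  exact hd (by simpa using hle)

end WeightSpaces

section ExtremalVectors

open LieAlgebra.IsKilling

variable {H : LieSubalgebra ℂ L} {r : ℕ} {α : Fin r → Module.Dual ℂ H}
variable {W W' : Type*} [AddCommGroup W] [Module ℂ W] [LieRingModule L W] [LieModule ℂ L W]
  [AddCommGroup W'] [Module ℂ W'] [LieRingModule L W'] [LieModule ℂ L W']

variable (H α W) in
/-- The sum of the weight spaces for the weights strictly below `μ`. -/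
noncomputable def weightsBelow (μ : Module.Dual ℂ H) : Submodule ℂ W :=
  ⨆ c : {c : Fin r → ℕ // c ≠ 0}, weightSubmodule H W (μ - rootSum α c)

lemma weightSubmodule_le_weightsBelow {μ : Module.Dual ℂ H} {c : Fin r → ℕ} (hc : c ≠ 0) :
    weightSubmodule H W (μ - rootSum α c) ≤ weightsBelow H α W μ :=
  le_iSup (fun c : {c : Fin r → ℕ // c ≠ 0} ↦ weightSubmodule H W (μ - rootSum α c)) ⟨c, hc⟩

lemma tmul_mem_weightSubmodule {χ ψ : Module.Dual ℂ H} {x : W} {y : W'}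
    (hx : x ∈ weightSubmodule H W χ) (hy : y ∈ weightSubmodule H W' ψ) :
    x ⊗ₜ[ℂ] y ∈ weightSubmodule H (W ⊗[ℂ] W') (χ + ψ) := by
  intro h
  rw [TensorProduct.LieModule.lie_tmul_right, hx h, hy h, LinearMap.add_apply, add_smul,
    TensorProduct.smul_tmul', TensorProduct.tmul_smul]

variable [H.IsCartanSubalgebra]

/-- `t` spans the weight space of a weight `μ` such that all other weights of `W` lie strictly
below `μ`. Unlike irreducibility, this property is inherited by tensor products. -/
structure IsTopVector (H : LieSubalgebra ℂ L) [H.IsCartanSubalgebra]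
    (α : Fin r → Module.Dual ℂ H) (μ : Module.Dual ℂ H) (t : W) : Prop where
  ne_zero : t ≠ 0
  mem_weightSubmodule : t ∈ weightSubmodule H W μ
  span_sup_weightsBelow : Submodule.span ℂ {t} ⊔ weightsBelow H α W μ = ⊤

section SpanSupWeightsBelow

variable {μ : Module.Dual ℂ H} {t : W}

lemma eq_zero_of_mem_weightsBelow (hα : IsBase H α) {w : W}
    (hw : w ∈ weightSubmodule H W μ) (hw' : w ∈ weightsBelow H α W μ) : w = 0 :=
  eq_zero_of_mem_weightSubmodule_of_mem_iSup
    (fun c : {c : Fin r → ℕ // c ≠ 0} ↦ μ - rootSum α c)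
    (fun c h ↦ c.2 (hα.rootSum_eq_zero_iff.mp (by simpa using h))) hw hw'

lemma exists_eq_sub_rootSum_of_mem_span_sup_weightsBelow (ht : t ∈ weightSubmodule H W μ)
    {χ : Module.Dual ℂ H} {w : W} (hw : w ∈ weightSubmodule H W χ) (hw0 : w ≠ 0)
    (hwt : w ∈ Submodule.span ℂ {t} ⊔ weightsBelow H α W μ) : ∃ c, χ = μ - rootSum α c := by
  by_contra! hχ
  have hle : Submodule.span ℂ {t} ⊔ weightsBelow H α W μ ≤
      ⨆ c, weightSubmodule H W (μ - rootSum α c) := by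
    refine sup_le ?_ (iSup_le fun c ↦ le_iSup_of_le c.1 le_rfl)
    rw [Submodule.span_singleton_le_iff_mem]
    exact Submodule.mem_iSup_of_mem 0 (by simpa using ht)
  exact hw0 (eq_zero_of_mem_weightSubmodule_of_mem_iSup _ (fun c h ↦ hχ c h.symm) hw (hle hwt))

lemma exists_eq_smul_of_mem_span_sup_weightsBelow (hα : IsBase H α)
    (ht : t ∈ weightSubmodule H W μ) {w : W} (hw : w ∈ weightSubmodule H W μ)
    (hwt : w ∈ Submodule.span ℂ {t} ⊔ weightsBelow H α W μ) : ∃ a : ℂ, w = a • t := by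
  obtain ⟨_, hy, z, hz, rfl⟩ := Submodule.mem_sup.mp hwt
  obtain ⟨a, rfl⟩ := Submodule.mem_span_singleton.mp hy
  have hzμ := (weightSubmodule H W μ).sub_mem hw ((weightSubmodule H W μ).smul_mem a ht)
  rw [add_sub_cancel_left] at hzμ
  exact ⟨a, by rw [eq_zero_of_mem_weightsBelow hα hzμ hz, add_zero]⟩

end SpanSupWeightsBelow

namespace IsTopVector

variable {μ : Module.Dual ℂ H} {t : W}

lemma exists_eq_sub_rootSum (ht : IsTopVector H α μ t) {χ : Module.Dual ℂ H} {w : W}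
    (hw : w ∈ weightSubmodule H W χ) (hw0 : w ≠ 0) : ∃ c, χ = μ - rootSum α c :=
  exists_eq_sub_rootSum_of_mem_span_sup_weightsBelow ht.mem_weightSubmodule hw hw0
    (ht.span_sup_weightsBelow.ge Submodule.mem_top)

lemma exists_eq_smul (ht : IsTopVector H α μ t) (hα : IsBase H α) {w : W}
    (hw : w ∈ weightSubmodule H W μ) : ∃ a : ℂ, w = a • t :=
  exists_eq_smul_of_mem_span_sup_weightsBelow hα ht.mem_weightSubmodule hw
    (ht.span_sup_weightsBelow.ge Submodule.mem_top)

lemma dual_ext (ht : IsTopVector H α μ t) {φ ψ : Module.Dual ℂ W} (htop : φ t = ψ t)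
    (hbelow : ∀ w ∈ weightsBelow H α W μ, φ w = ψ w) : φ = ψ := by
  rw [← sub_eq_zero, ← LinearMap.ker_eq_top, ← top_le_iff, ← ht.span_sup_weightsBelow]
  refine sup_le ?_ fun w hw ↦ by simp [hbelow w hw]
  rw [Submodule.span_singleton_le_iff_mem]
  simp [htop]

end IsTopVector

lemma IsTopVector.tmul {μ ν : Module.Dual ℂ H} {t : W} {s : W'} (ht : IsTopVector H α μ t)
    (hs : IsTopVector H α ν s) : IsTopVector H α (μ + ν) (t ⊗ₜ[ℂ] s) where
  ne_zero h := by
    obtain ⟨φ, hφ⟩ := Module.Projective.exists_dual_ne_zero ℂ ht.ne_zero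
    obtain ⟨ψ, hψ⟩ := Module.Projective.exists_dual_ne_zero ℂ hs.ne_zero
    simpa [hφ, hψ] using congrArg (LinearMap.mul' ℂ ℂ ∘ₗ TensorProduct.map φ ψ) h
  mem_weightSubmodule := tmul_mem_weightSubmodule ht.mem_weightSubmodule hs.mem_weightSubmodule
  span_sup_weightsBelow := by
    have ht0 : Submodule.span ℂ {t} ≤ weightSubmodule H W (μ - rootSum α 0) := by
      simpa using ht.mem_weightSubmodule
    have hs0 : Submodule.span ℂ {s} ≤ weightSubmodule H W' (ν - rootSum α 0) := by
      simpa using hs.mem_weightSubmodule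
    have hbelow {c d : Fin r → ℕ} (hcd : c + d ≠ 0) :
        Submodule.map₂ (TensorProduct.mk ℂ W W') (weightSubmodule H W (μ - rootSum α c))
          (weightSubmodule H W' (ν - rootSum α d)) ≤ weightsBelow H α (W ⊗[ℂ] W') (μ + ν) := by
      refine Submodule.map₂_le.mpr fun x hx y hy ↦ weightSubmodule_le_weightsBelow hcd ?_
      rw [map_add, ← sub_add_sub_comm]
      exact tmul_mem_weightSubmodule hx hy
    rw [← top_le_iff, ← TensorProduct.map₂_mk_top_top_eq_top, ← ht.span_sup_weightsBelow,
      ← hs.span_sup_weightsBelow, Submodule.map₂_sup_left, Submodule.map₂_sup_right,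
      Submodule.map₂_sup_right, Submodule.map₂_span_span, Set.image2_singleton]
    refine sup_le (sup_le_sup_left ?_ _) (le_sup_of_le_right (sup_le ?_ ?_))
    · rw [weightsBelow, Submodule.map₂_iSup_right]
      exact iSup_le fun d ↦ (Submodule.map₂_le_map₂_left ht0).trans (hbelow (by simp [d.2]))
    · rw [weightsBelow, Submodule.map₂_iSup_left]
      exact iSup_le fun c ↦ (Submodule.map₂_le_map₂_right hs0).trans (hbelow (by simp [c.2]))
    · rw [weightsBelow, weightsBelow, Submodule.map₂_iSup_left]
      refine iSup_le fun c ↦ ?_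
      rw [Submodule.map₂_iSup_right]
      exact iSup_le fun d ↦ hbelow (by simp [c.2])

lemma IsHighestWeightVector.lieSpan_eq_top [LieModule.IsIrreducible ℂ L W] {μ : Module.Dual ℂ H}
    {v : W} (hv : IsHighestWeightVector H α μ v) : LieSubmodule.lieSpan ℂ L {v} = ⊤ :=
  (IsSimpleOrder.eq_bot_or_eq_top _).resolve_left fun h ↦
    hv.ne_zero (by simpa [LieSubmodule.lieSpan_eq_bot_iff] using h)

variable [FiniteDimensional ℂ L] [IsKilling ℂ L]

lemma IsHighestWeightVector.lieSpan_le_of_lowering (hα : IsBase H α) {μ : Module.Dual ℂ H} {v : W}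
    (hv : IsHighestWeightVector H α μ v) {P : Submodule ℂ W} (hvP : v ∈ P)
    (hP : ∀ χ, IsPosRoot H α χ → ∀ f ∈ rootSpace H ⇑(-χ), ∀ w ∈ P, ⁅f, w⁆ ∈ P) :
    (LieSubmodule.lieSpan ℂ L {v}).toSubmodule ≤ P := by
  let lowered : Set (Submodule ℂ W) :=
    {Q | v ∈ Q ∧ ∀ χ, IsPosRoot H α χ → ∀ f ∈ rootSpace H ⇑(-χ), ∀ w ∈ Q, ⁅f, w⁆ ∈ Q}
  let Q : Submodule ℂ W := sInf lowered
  have hvQ : v ∈ Q := Submodule.mem_sInf.mpr fun _ hQ' ↦ hQ'.1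
  have hQ : ∀ χ, IsPosRoot H α χ → ∀ f ∈ rootSpace H ⇑(-χ), ∀ w ∈ Q, ⁅f, w⁆ ∈ Q :=
    fun χ hχ f hf w hw ↦ Submodule.mem_sInf.mpr fun Q' hQ' ↦
      hQ'.2 χ hχ f hf w (Submodule.mem_sInf.mp hw Q' hQ')
  let stable : Submodule ℂ W := Q ⊓ ⨅ y : L, Q.comap (toEnd ℂ L W y)
  have mem_stable {w : W} : w ∈ stable ↔ w ∈ Q ∧ ∀ y : L, ⁅y, w⁆ ∈ Q := by
    simp [stable, Submodule.mem_iInf]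
  have hv_lie : Q.comap ((toEnd ℂ L W : L →ₗ[ℂ] Module.End ℂ W).flip v) = ⊤ :=
    hα.eq_top_of_rootSpaces_le
      (fun h ↦ by simpa [hv.mem_weightSubmodule h] using Q.smul_mem _ hvQ)
      (fun χ hχ e he ↦ by simp [hv.lie_eq_zero χ hχ e he])
      (fun χ hχ f hf ↦ by simpa using hQ χ hχ f hf v hvQ)
  have hQ_le : Q ≤ stable := by
    refine sInf_le ⟨mem_stable.mpr ⟨hvQ, fun y ↦ ?_⟩, fun χ hχ f hf w hw ↦ ?_⟩
    · exact hv_lie.ge (Submodule.mem_top (x := y))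
    · obtain ⟨hwQ, hwL⟩ := mem_stable.mp hw
      refine mem_stable.mpr ⟨hQ χ hχ f hf w hwQ, fun y ↦ ?_⟩
      rw [leibniz_lie]
      exact Q.add_mem (hwL _) (hQ χ hχ f hf _ (hwL y))
  let N : LieSubmodule ℂ L W := { Q with lie_mem := fun hw ↦ (mem_stable.mp (hQ_le hw)).2 _ }
  have hN : LieSubmodule.lieSpan ℂ L {v} ≤ N :=
    LieSubmodule.lieSpan_le.mpr (Set.singleton_subset_iff.mpr hvQ)
  exact fun w hw ↦ (sInf_le ⟨hvP, hP⟩ : Q ≤ P) (hN hw)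

lemma lie_mem_weightsBelow {μ : Module.Dual ℂ H} {v : W} (hv : v ∈ weightSubmodule H W μ)
    {χ : Module.Dual ℂ H} (hχ : IsPosRoot H α χ) {f : L} (hf : f ∈ rootSpace H ⇑(-χ)) {w : W}
    (hw : w ∈ Submodule.span ℂ {v} ⊔ weightsBelow H α W μ) : ⁅f, w⁆ ∈ weightsBelow H α W μ := by
  obtain ⟨d, hd, rfl⟩ := hχ.exists_rootSum
  suffices Submodule.span ℂ {v} ⊔ weightsBelow H α W μ ≤
    (weightsBelow H α W μ).comap (toEnd ℂ L W f) from this hw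
  refine sup_le ?_ (iSup_le fun ⟨c, _⟩ x hx ↦ ?_)
  · rw [Submodule.span_singleton_le_iff_mem, Submodule.mem_comap, toEnd_apply_apply]
    have hfv := lie_mem_weightSubmodule hf hv
    rw [← sub_eq_add_neg] at hfv
    exact weightSubmodule_le_weightsBelow hd hfv
  · have hfx := lie_mem_weightSubmodule hf hx
    rw [← sub_eq_add_neg, sub_sub, ← map_add] at hfx
    exact weightSubmodule_le_weightsBelow (by simp [hd]) hfx

lemma IsHighestWeightVector.lieSpan_le (hα : IsBase H α) {μ : Module.Dual ℂ H} {v : W}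
    (hv : IsHighestWeightVector H α μ v) :
    (LieSubmodule.lieSpan ℂ L {v}).toSubmodule ≤
      Submodule.span ℂ {v} ⊔ weightsBelow H α W μ :=
  hv.lieSpan_le_of_lowering hα (Submodule.mem_sup_left (Submodule.mem_span_singleton_self v))
    fun _ hχ _ hf _ hw ↦
      Submodule.mem_sup_right (lie_mem_weightsBelow hv.mem_weightSubmodule hχ hf hw)

lemma IsHighestWeightVector.isTopVector [LieModule.IsIrreducible ℂ L W] (hα : IsBase H α)
    {μ : Module.Dual ℂ H} {v : W} (hv : IsHighestWeightVector H α μ v) :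
    IsTopVector H α μ v where
  ne_zero := hv.ne_zero
  mem_weightSubmodule := hv.mem_weightSubmodule
  span_sup_weightsBelow := by
    rw [← top_le_iff]
    simpa [hv.lieSpan_eq_top] using hv.lieSpan_le hα

namespace IsTopVector

variable {μ : Module.Dual ℂ H} {t : W}

lemma isHighestWeightVector (ht : IsTopVector H α μ t) (hα : IsBase H α) :
    IsHighestWeightVector H α μ t where
  ne_zero := ht.ne_zero
  mem_weightSubmodule := ht.mem_weightSubmodule
  lie_eq_zero χ hχ e he := by_contra fun h ↦ by
    obtain ⟨d, hd, rfl⟩ := hχ.exists_rootSum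
    obtain ⟨c, hc⟩ := ht.exists_eq_sub_rootSum (lie_mem_weightSubmodule he ht.mem_weightSubmodule) h
    have hsum : rootSum α (d + c) = 0 := by
      rw [map_add, ← sub_eq_zero.mpr hc]
      abel
    exact hd (add_eq_zero.mp (hα.rootSum_eq_zero_iff.mp hsum)).1

lemma exists_dual_vector (ht : IsTopVector H α μ t) (hα : IsBase H α) :
    ∃ ψ : Module.Dual ℂ W, ψ t = 1 ∧ IsHighestWeightVector H (-α) (-μ) ψ := by
  have htb : t ∉ weightsBelow H α W μ := fun h ↦
    ht.ne_zero (eq_zero_of_mem_weightsBelow hα ht.mem_weightSubmodule h)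
  obtain ⟨ψ₀, hψ₀t, hψ₀⟩ := Submodule.exists_dual_map_eq_bot_of_notMem htb inferInstance
  set ψ := (ψ₀ t)⁻¹ • ψ₀ with hψ
  have hψt : ψ t = 1 := inv_mul_cancel₀ hψ₀t
  have hψb : ∀ w ∈ weightsBelow H α W μ, ψ w = 0 := fun w hw ↦ by
    rw [hψ, LinearMap.smul_apply, (Submodule.eq_bot_iff _).mp hψ₀ _ (Submodule.mem_map_of_mem hw),
      smul_zero]
  refine ⟨ψ, hψt, fun h ↦ by simp [h] at hψt, fun h ↦ ht.dual_ext ?_ fun w hw ↦ ?_,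
    fun χ hχ f hf ↦ LinearMap.ext fun w ↦ ?_⟩
  · simp [ht.mem_weightSubmodule h, hψt]
  · suffices ⁅(h : L), w⁆ ∈ weightsBelow H α W μ by simp [hψb _ this, hψb w hw]
    suffices weightsBelow H α W μ ≤ (weightsBelow H α W μ).comap (toEnd ℂ L W h) from this hw
    refine iSup_le fun ⟨c, hc⟩ x hx ↦ weightSubmodule_le_weightsBelow hc ?_
    simpa [hx h] using Submodule.smul_mem _ _ hx
  · have hfw : ⁅f, w⁆ ∈ weightsBelow H α W μ :=
      lie_mem_weightsBelow ht.mem_weightSubmodule (isPosRoot_neg_base_iff.mp hχ)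
        (by simpa using hf) (ht.span_sup_weightsBelow.ge Submodule.mem_top)
    simp [hψb _ hfw]

end IsTopVector

end ExtremalVectors

section Casimir

variable {K 𝔤 ι : Type*} [Field K] [LieRing 𝔤] [LieAlgebra K 𝔤] [IsKilling K 𝔤]
  [Fintype ι] (b : Basis ι K 𝔤)

/-- The basis of `𝔤` which is dual to `b` for the Killing form. -/
noncomputable def killingDualBasis : Basis ι K 𝔤 :=
  LinearMap.BilinForm.dualBasis (killingForm K 𝔤) (IsKilling.killingForm_nondegenerate K 𝔤) b

lemma killingForm_killingDualBasis (i j : ι) :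
    killingForm K 𝔤 (killingDualBasis b i) (b j) = if j = i then 1 else 0 :=
  LinearMap.BilinForm.apply_dualBasis_left _ _ _ _

lemma sum_killingForm_smul_killingDualBasis (x : 𝔤) :
    ∑ i, killingForm K 𝔤 x (b i) • killingDualBasis b i = x := by
  simpa [killingDualBasis] using (killingDualBasis b).sum_repr x

lemma sum_killingForm_killingDualBasis_smul (x : 𝔤) :
    ∑ i, killingForm K 𝔤 x (killingDualBasis b i) • b i = x := by
  simpa [killingDualBasis, LinearMap.BilinForm.dualBasis_dualBasis _
    ⟨LieModule.traceForm_comm K 𝔤 𝔤⟩] using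
    sum_killingForm_smul_killingDualBasis (killingDualBasis b) x

lemma killingForm_eq_sum (x y : 𝔤) :
    killingForm K 𝔤 x y =
      ∑ i, killingForm K 𝔤 x (b i) * killingForm K 𝔤 y (killingDualBasis b i) := by
  conv_lhs => rw [← sum_killingForm_killingDualBasis_smul b y]
  simp [mul_comm]

variable (M : Type*) [AddCommGroup M] [Module K M] [LieRingModule 𝔤 M] [LieModule K 𝔤 M]

/-- Moving `y` past the Casimir element produces the two sums below; they cancel because the Killing
form is invariant. -/
lemma sum_lie_basis_lie_add_sum_lie_lie (y : 𝔤) (m : M) :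
    ∑ i, ⁅⁅y, b i⁆, ⁅killingDualBasis b i, m⁆⁆ +
      ∑ i, ⁅b i, ⁅⁅y, killingDualBasis b i⁆, m⁆⁆ = 0 := by
  have hleft (i : ι) : ⁅⁅y, b i⁆, ⁅killingDualBasis b i, m⁆⁆ =
      ∑ j, killingForm K 𝔤 ⁅y, b i⁆ (killingDualBasis b j) • ⁅b j, ⁅killingDualBasis b i, m⁆⁆ := by
    conv_lhs => rw [← sum_killingForm_killingDualBasis_smul b ⁅y, b i⁆]
    simp only [sum_lie, smul_lie]
  have hright (i : ι) : ⁅b i, ⁅⁅y, killingDualBasis b i⁆, m⁆⁆ =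
      ∑ j, killingForm K 𝔤 ⁅y, killingDualBasis b i⁆ (b j) • ⁅b i, ⁅killingDualBasis b j, m⁆⁆ := by
    conv_lhs => rw [← sum_killingForm_smul_killingDualBasis b ⁅y, killingDualBasis b i⁆]
    simp only [sum_lie, smul_lie, lie_sum, lie_smul]
  have hinv (x z : 𝔤) : killingForm K 𝔤 ⁅y, x⁆ z + killingForm K 𝔤 ⁅y, z⁆ x = 0 := by
    rw [traceForm_comm K 𝔤 𝔤 ⁅y, z⁆ x, ← lie_skew y x, map_neg, LinearMap.neg_apply,
      traceForm_apply_lie_apply, neg_add_cancel]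
  simp only [hleft, hright]
  rw [Finset.sum_comm]
  simp only [← Finset.sum_add_distrib, ← add_smul, hinv, zero_smul, Finset.sum_const_zero]

/-- The action of the Casimir element `∑ i, b i * killingDualBasis b i` on a module. -/
noncomputable def casimir : M →ₗ⁅K,𝔤⁆ M where
  __ := ∑ i, toEnd K 𝔤 M (b i) ∘ₗ toEnd K 𝔤 M (killingDualBasis b i)
  map_lie' {y m} := by
    simp only [AddHom.toFun_eq_coe, LinearMap.coe_toAddHom, LinearMap.sum_apply,
      LinearMap.comp_apply, toEnd_apply_apply, lie_sum]
    have hlie (i : ι) : ⁅y, ⁅b i, ⁅killingDualBasis b i, m⁆⁆⁆ =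
        ⁅⁅y, b i⁆, ⁅killingDualBasis b i, m⁆⁆ + ⁅b i, ⁅⁅y, killingDualBasis b i⁆, m⁆⁆ +
          ⁅b i, ⁅killingDualBasis b i, ⁅y, m⁆⁆⁆ := by
      rw [leibniz_lie y (b i), leibniz_lie y (killingDualBasis b i), lie_add, add_assoc]
    rw [Finset.sum_congr rfl fun i _ ↦ hlie i, Finset.sum_add_distrib, Finset.sum_add_distrib,
      sum_lie_basis_lie_add_sum_lie_lie, zero_add]

variable {M}

lemma casimir_apply (m : M) : casimir b M m = ∑ i, ⁅b i, ⁅killingDualBasis b i, m⁆⁆ := by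
  simp [casimir, ← LieModuleHom.coe_toLinearMap]

end Casimir

section CasimirValue

open LieAlgebra.IsKilling

variable [FiniteDimensional ℂ L] (H : LieSubalgebra ℂ L) [H.IsCartanSubalgebra]

lemma isInternal_rootSpace : DirectSum.IsInternal
    fun χ : Weight ℂ H L ↦ (rootSpace H ⇑χ : LieSubmodule ℂ H L).toSubmodule := by
  refine DirectSum.isInternal_submodule_of_iSupIndep_of_iSup_eq_top
    (LieSubmodule.iSupIndep_toSubmodule.mpr (iSupIndep_genWeightSpace' ℂ H L)) ?_
  rw [← LieSubmodule.iSup_toSubmodule, iSup_genWeightSpace_eq_top', LieSubmodule.top_toSubmodule]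

/-- A basis of `L` consisting of root vectors and of a basis of the Cartan subalgebra. -/
noncomputable def rootBasis :
    Basis (Σ χ : Weight ℂ H L, Fin (finrank ℂ (rootSpace H ⇑χ))) ℂ L :=
  (isInternal_rootSpace H).collectedBasis fun χ ↦ finBasis ℂ (rootSpace H ⇑χ)

variable {H}

lemma rootBasis_mem (i : Σ χ : Weight ℂ H L, Fin (finrank ℂ (rootSpace H ⇑χ))) :
    rootBasis H i ∈ rootSpace H ⇑i.1 :=
  (isInternal_rootSpace H).collectedBasis_mem (fun χ ↦ finBasis ℂ (rootSpace H ⇑χ)) i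

lemma mem_of_mem_rootSpace_of_isZero {χ : Weight ℂ H L} (hχ : χ.IsZero) {x : L}
    (hx : x ∈ rootSpace H ⇑χ) : x ∈ H := by
  rw [show ⇑χ = 0 from hχ, rootSpace_zero_eq] at hx
  simpa using hx

lemma killingForm_eq_zero_of_mem_rootSpace (h : H) {χ : Weight ℂ H L} (hχ : χ.IsNonZero) {x : L}
    (hx : x ∈ rootSpace H ⇑χ) : killingForm ℂ L h x = 0 := by
  refine killingForm_apply_eq_zero_of_mem_rootSpace_of_add_ne_zero ℂ L H (α := 0) ?_ hx ?_
  · simp [rootSpace_zero_eq]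
  · rwa [zero_add]

variable {r : ℕ} {α : Fin r → Module.Dual ℂ H}

variable (α) in
/-- The positive roots, as a finite set of weights of the adjoint representation. -/
noncomputable def posRoots : Finset (Weight ℂ H L) :=
  {χ | IsPosRoot H α (Weight.toLinear ℂ H L χ)}

lemma mem_posRoots {χ : Weight ℂ H L} :
    χ ∈ posRoots α ↔ IsPosRoot H α (Weight.toLinear ℂ H L χ) := by
  simp [posRoots]

lemma isNonZero_of_mem_posRoots {χ : Weight ℂ H L} (hχ : χ ∈ posRoots α) : χ.IsNonZero := by
  simpa using (mem_posRoots.mp hχ).1.1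

variable [IsKilling ℂ L]

lemma killingDualBasis_rootBasis_mem
    (i : Σ χ : Weight ℂ H L, Fin (finrank ℂ (rootSpace H ⇑χ))) :
    killingDualBasis (rootBasis H) i ∈ rootSpace H ⇑(-i.1) := by
  set b := rootBasis H
  refine weightSpace_le_genWeightSpace _ _ ((mem_weightSpace _ _).mpr fun h ↦ ?_)
  have hcoeff (j) : killingForm ℂ L ⁅(h : L), killingDualBasis b i⁆ (b j) =
      if j = i then -i.1 h else 0 := by
    rw [← lie_skew, map_neg, LinearMap.neg_apply, traceForm_apply_lie_apply,
      show ⁅(h : L), b j⁆ = j.1 h • b j from lie_eq_smul_of_mem_rootSpace (rootBasis_mem j) h,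
      map_smul, killingForm_killingDualBasis]
    split_ifs with hji <;> simp [hji]
  rw [LieSubalgebra.coe_bracket_of_module,
    ← sum_killingForm_smul_killingDualBasis b ⁅(h : L), killingDualBasis b i⁆]
  simp [hcoeff]

lemma killingForm_cartanEquivDual_symm (χ : Module.Dual ℂ H) (h : H) :
    killingForm ℂ L ((cartanEquivDual H).symm χ : H) (h : L) = χ h :=
  congrArg (· h) ((cartanEquivDual H).apply_symm_apply χ)

variable (H) in
/-- The bilinear form on the dual of the Cartan subalgebra induced by the Killing form. -/
noncomputable def weightForm : LinearMap.BilinForm ℂ (Module.Dual ℂ H) :=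
  (LinearMap.id : Module.Dual ℂ H →ₗ[ℂ] H →ₗ[ℂ] ℂ).compl₂ (cartanEquivDual H).symm.toLinearMap

lemma weightForm_apply (χ ψ : Module.Dual ℂ H) :
    weightForm H χ ψ = χ ((cartanEquivDual H).symm ψ) := rfl

lemma weightForm_comm (χ ψ : Module.Dual ℂ H) : weightForm H χ ψ = weightForm H ψ χ := by
  rw [weightForm_apply, weightForm_apply, ← killingForm_cartanEquivDual_symm χ,
    ← killingForm_cartanEquivDual_symm ψ, traceForm_comm]

variable (α) in
/-- The sum `2ρ` of the positive roots. -/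
noncomputable def twoRho : Module.Dual ℂ H := ∑ χ ∈ posRoots α, Weight.toLinear ℂ H L χ

variable (α) in
/-- The scalar `⟨μ, μ + 2ρ⟩` by which the Casimir element acts on highest weight vectors. -/
noncomputable def casimirValue (μ : Module.Dual ℂ H) : ℂ := weightForm H μ (μ + twoRho α)

variable {W : Type*} [AddCommGroup W] [Module ℂ W] [LieRingModule L W] [LieModule ℂ L W]

lemma lie_lie_of_isZero {μ : Module.Dual ℂ H} {v : W} (hv : v ∈ weightSubmodule H W μ)
    {i : Σ χ : Weight ℂ H L, Fin (finrank ℂ (rootSpace H ⇑χ))} (hi : i.1.IsZero) :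
    ⁅rootBasis H i, ⁅killingDualBasis (rootBasis H) i, v⁆⁆ =
      (killingForm ℂ L ((cartanEquivDual H).symm μ : H) (rootBasis H i) *
        killingForm ℂ L ((cartanEquivDual H).symm μ : H) (killingDualBasis (rootBasis H) i)) •
          v := by
  lift rootBasis H i to H using mem_of_mem_rootSpace_of_isZero hi (rootBasis_mem i) with x
  lift killingDualBasis (rootBasis H) i to H using
    mem_of_mem_rootSpace_of_isZero hi.neg (killingDualBasis_rootBasis_mem i) with y
  rw [hv, lie_smul, hv, smul_smul, killingForm_cartanEquivDual_symm,
    killingForm_cartanEquivDual_symm, mul_comm]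

namespace IsHighestWeightVector

variable {μ : Module.Dual ℂ H} {v : W}

lemma lie_lie_of_mem_posRoots (hv : IsHighestWeightVector H α μ v)
    {i : Σ χ : Weight ℂ H L, Fin (finrank ℂ (rootSpace H ⇑χ))} (hi : i.1 ∈ posRoots α) :
    ⁅rootBasis H i, ⁅killingDualBasis (rootBasis H) i, v⁆⁆ =
      weightForm H μ (Weight.toLinear ℂ H L i.1) • v := by
  rw [leibniz_lie, hv.lie_eq_zero _ (mem_posRoots.mp hi) _ (rootBasis_mem i), lie_zero, add_zero,
    lie_eq_killingForm_smul_of_mem_rootSpace_of_mem_rootSpace_neg (rootBasis_mem i)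
      (by simpa using killingDualBasis_rootBasis_mem i), traceForm_comm,
    killingForm_killingDualBasis, if_pos rfl, one_smul, hv.mem_weightSubmodule]
  rfl

lemma lie_lie_of_notMem_posRoots (hv : IsHighestWeightVector H α μ v) (hα : IsBase H α)
    {i : Σ χ : Weight ℂ H L, Fin (finrank ℂ (rootSpace H ⇑χ))} (hi0 : i.1.IsNonZero)
    (hi : i.1 ∉ posRoots α) : ⁅rootBasis H i, ⁅killingDualBasis (rootBasis H) i, v⁆⁆ = 0 := by
  have hroot := isRoot_weight_toLinear i.1 hi0
  have hneg : IsPosRoot H α (-Weight.toLinear ℂ H L i.1) := by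
    refine ⟨hroot.neg, ?_⟩
    rcases hα.pos_neg _ hroot with hpos | ⟨c, hc⟩
    · exact absurd (mem_posRoots.mpr ⟨hroot, hpos⟩) hi
    · exact ⟨c, by rw [hc, neg_neg]⟩
  rw [hv.lie_eq_zero _ hneg _ (killingDualBasis_rootBasis_mem i), lie_zero]

lemma casimir_eq (hv : IsHighestWeightVector H α μ v) (hα : IsBase H α) :
    casimir (rootBasis H) W v = casimirValue α μ • v := by
  set t := (cartanEquivDual H).symm μ
  have hterm (i) : ⁅rootBasis H i, ⁅killingDualBasis (rootBasis H) i, v⁆⁆ =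
      (killingForm ℂ L t (rootBasis H i) *
        killingForm ℂ L t (killingDualBasis (rootBasis H) i) +
        if i.1 ∈ posRoots α then weightForm H μ (Weight.toLinear ℂ H L i.1) else 0) • v := by
    by_cases hi0 : i.1.IsZero
    · rw [lie_lie_of_isZero hv.mem_weightSubmodule hi0,
        if_neg fun h ↦ isNonZero_of_mem_posRoots h hi0, add_zero]
    · rw [killingForm_eq_zero_of_mem_rootSpace t hi0 (rootBasis_mem i), zero_mul, zero_add]
      split_ifs with hi
      · exact hv.lie_lie_of_mem_posRoots hi
      · rw [hv.lie_lie_of_notMem_posRoots hα hi0 hi, zero_smul]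
  have hrho : ∑ i : Σ χ : Weight ℂ H L, Fin (finrank ℂ (rootSpace H ⇑χ)),
      (if i.1 ∈ posRoots α then weightForm H μ (Weight.toLinear ℂ H L i.1) else 0) =
        weightForm H μ (twoRho α) := by
    rw [twoRho, map_sum, Fintype.sum_sigma, ← Finset.sum_filter_of_ne (p := (· ∈ posRoots α)),
      Finset.filter_univ_mem]
    · refine Finset.sum_congr rfl fun χ hχ ↦ ?_
      simp [hχ, finrank_rootSpace_eq_one χ (isNonZero_of_mem_posRoots hχ)]
    · intro χ _ hχ
      by_contra h
      simp [h] at hχ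
  rw [casimir_apply, Finset.sum_congr rfl fun i _ ↦ hterm i, ← Finset.sum_smul,
    Finset.sum_add_distrib, ← killingForm_eq_sum, hrho, killingForm_cartanEquivDual_symm,
    casimirValue, map_add]
  rfl

end IsHighestWeightVector

end CasimirValue

section Positivity

open LieAlgebra.IsKilling
open scoped ComplexOrder

variable {H : LieSubalgebra ℂ L} [H.IsCartanSubalgebra] {r : ℕ} {α : Fin r → Module.Dual ℂ H}
  {j : Fin r}

lemma IsBase.coeff_eq_zero_of_rootSum_eq_smul (hα : IsBase H α) {c : Fin r → ℕ} {z : ℂ}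
    (hcz : rootSum α c = z • α j) {i : Fin r} (hij : i ≠ j) : c i = 0 := by
  have hzero := Fintype.linearIndependent_iff.mp hα.indep
    (fun i ↦ (c i : ℂ) - if i = j then z else 0) (by
      simpa [sub_smul, rootSum_apply] using sub_eq_zero.mpr hcz) i
  simpa [hij] using hzero

variable [FiniteDimensional ℂ L] [IsKilling ℂ L]

lemma IsCoroot.eq_coroot {χ : Weight ℂ H L} {t : H}
    (ht : IsCoroot H (Weight.toLinear ℂ H L χ) t) : t = coroot χ := by
  obtain ⟨htwo, e, he, f, hf, hef⟩ := ht
  exact eq_coroot_of_mem_corootSpace_of_two χ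
    ((mem_corootSpace χ).mpr (Submodule.subset_span ⟨e, he, f, hf, hef.symm⟩)) htwo

lemma traceForm_coroot_coroot_nonneg (χ : Weight ℂ H L) :
    0 ≤ traceForm ℂ H L (coroot χ) (coroot χ) := by
  rw [traceForm_eq_sum_finrank_nsmul_mul]
  refine Finset.sum_nonneg fun ψ _ ↦ nsmul_nonneg ?_ _
  rw [apply_coroot_eq_cast]
  exact_mod_cast mul_self_nonneg _

lemma weightForm_self_pos {χ : Weight ℂ H L} (hχ : χ.IsNonZero) :
    0 < weightForm H (Weight.toLinear ℂ H L χ) (Weight.toLinear ℂ H L χ) := by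
  have hne : weightForm H (Weight.toLinear ℂ H L χ) (Weight.toLinear ℂ H L χ) ≠ 0 :=
    root_apply_cartanEquivDual_symm_ne_zero hχ
  have htrace := traceForm_coroot_coroot_nonneg χ
  rw [traceForm_coroot, root_apply_coroot hχ] at htrace
  change 0 ≤ 2 • (weightForm H (Weight.toLinear ℂ H L χ) (Weight.toLinear ℂ H L χ))⁻¹ • (2 : ℂ)
    at htrace
  have hinv : (0 : ℂ) ≤ (weightForm H (Weight.toLinear ℂ H L χ) (Weight.toLinear ℂ H L χ))⁻¹ := by
    have hquarter : (0 : ℂ) ≤ 4⁻¹ := inv_nonneg.mpr (by norm_num)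
    convert mul_nonneg htrace hquarter using 1
    rw [two_smul, smul_eq_mul]
    ring
  exact inv_pos.mp (lt_of_le_of_ne hinv (inv_ne_zero hne).symm)

lemma weightForm_root (ν : Module.Dual ℂ H) {χ : Weight ℂ H L} (hχ : χ.IsNonZero) :
    weightForm H ν (Weight.toLinear ℂ H L χ) =
      ν (coroot χ) * (weightForm H (Weight.toLinear ℂ H L χ) (Weight.toLinear ℂ H L χ) / 2) := by
  have hne := (weightForm_self_pos hχ).ne'
  rw [weightForm_apply] at hne
  rw [coroot, map_nsmul, map_smul, weightForm_apply, weightForm_apply]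
  simp only [Weight.toLinear_apply] at hne ⊢
  simp
  field_simp

variable {a : Weight ℂ H L}

lemma IsBase.eq_of_mem_posRoots_of_eq_smul (hα : IsBase H α)
    (ha : Weight.toLinear ℂ H L a = α j) {χ : Weight ℂ H L} (hχ : χ ∈ posRoots α) {k : ℂ}
    (hk : Weight.toLinear ℂ H L χ = k • α j) : χ = a := by
  refine (eq_neg_or_eq_of_eq_smul a χ (isNonZero_of_mem_posRoots hχ) k
    (congrArg DFunLike.coe (ha ▸ hk))).resolve_left ?_
  rintro rfl
  obtain ⟨c, hc0, hc⟩ := (mem_posRoots.mp hχ).exists_rootSum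
  obtain ⟨d, -, hd⟩ := (hα.isPosRoot_simple j).exists_rootSum
  have hcd : rootSum α (c + d) = 0 := by
    rw [map_add, ← hc, ← hd, Weight.toLinear_neg, ha, neg_add_cancel]
  exact hc0 (add_eq_zero.mp (hα.rootSum_eq_zero_iff.mp hcd)).1

/-- Subtracting a multiple of a simple root changes only one coefficient, so that a positive root
with another nonzero coefficient stays positive. -/
lemma IsBase.reflectRoot_mem_posRoots (hα : IsBase H α) (ha : Weight.toLinear ℂ H L a = α j)
    {χ : Weight ℂ H L} (hχ : χ ∈ posRoots α) (hne : χ ≠ a) : reflectRoot a χ ∈ posRoots α := by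
  have hroot := isRoot_weight_toLinear _ (reflectRoot_isNonZero a χ (isNonZero_of_mem_posRoots hχ))
  refine mem_posRoots.mpr ⟨hroot, (hα.pos_neg _ hroot).resolve_right ?_⟩
  rintro ⟨d, hd⟩
  obtain ⟨c, -, hc⟩ := (mem_posRoots.mp hχ).exists_rootSum
  have hcd : rootSum α (c + d) = χ (coroot a) • α j := by
    have hrefl : Weight.toLinear ℂ H L (reflectRoot a χ) =
      Weight.toLinear ℂ H L χ - χ (coroot a) • Weight.toLinear ℂ H L a := rfl
    rw [hd, hc, ha] at hrefl
    rw [map_add, rootSum_apply d, ← sub_neg_eq_add, hrefl, sub_sub_cancel]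
  have hc0 (i : Fin r) (hij : i ≠ j) : c i = 0 :=
    (add_eq_zero.mp (hα.coeff_eq_zero_of_rootSum_eq_smul hcd hij)).1
  refine hne (hα.eq_of_mem_posRoots_of_eq_smul ha hχ (k := c j) (hc.trans ?_))
  rw [rootSum_apply, Fintype.sum_eq_single j]
  intro i hij
  rw [hc0 i hij, Nat.cast_zero, zero_smul]

lemma reflectRoot_apply_coroot {χ : Weight ℂ H L} (ha : a.IsNonZero) :
    reflectRoot a χ (coroot a) = -χ (coroot a) := by
  change χ (coroot a) - χ (coroot a) * a (coroot a) = _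
  rw [root_apply_coroot ha]
  ring

lemma reflectRoot_reflectRoot {χ : Weight ℂ H L} (ha : a.IsNonZero) :
    reflectRoot a (reflectRoot a χ) = χ := by
  ext h
  change χ h - χ (coroot a) * a h - reflectRoot a χ (coroot a) * a h = χ h
  rw [reflectRoot_apply_coroot ha]
  ring

lemma IsBase.twoRho_coroot (hα : IsBase H α) (ha : Weight.toLinear ℂ H L a = α j) :
    twoRho α (coroot a) = 2 := by
  have hmem : a ∈ posRoots α := mem_posRoots.mpr (ha ▸ hα.isPosRoot_simple j)
  have ha0 := isNonZero_of_mem_posRoots hmem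
  have hrest : ∑ χ ∈ (posRoots α).erase a, χ (coroot a) = 0 := by
    refine Finset.sum_involution (fun χ _ ↦ reflectRoot a χ) (fun χ _ ↦ ?_) (fun χ _ hχ h ↦ ?_)
      (fun χ hχ ↦ ?_) (fun χ _ ↦ reflectRoot_reflectRoot ha0)
    · rw [reflectRoot_apply_coroot ha0, add_neg_cancel]
    · have := reflectRoot_apply_coroot (χ := χ) ha0
      rw [h, eq_neg_iff_add_eq_zero, add_self_eq_zero] at this
      exact hχ this
    · obtain ⟨hχa, hχ⟩ := Finset.mem_erase.mp hχ
      refine Finset.mem_erase.mpr ⟨fun h ↦ hχa ?_, hα.reflectRoot_mem_posRoots ha hχ hχa⟩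
      refine hα.eq_of_mem_posRoots_of_eq_smul ha hχ (k := -1) ?_
      rw [← reflectRoot_reflectRoot (χ := χ) ha0, h, ← ha]
      ext x
      change a x - a (coroot a) * a x = -1 * a x
      rw [root_apply_coroot ha0]
      ring
  rw [twoRho, LinearMap.sum_apply, ← Finset.add_sum_erase _ _ hmem]
  simpa [root_apply_coroot ha0] using hrest

variable {hc : Fin r → H}

lemma casimirValue_sub (μ ν : Module.Dual ℂ H) :
    casimirValue α μ - casimirValue α ν = weightForm H (μ + ν + twoRho α) (μ - ν) := by
  simp only [casimirValue, map_add, map_sub, LinearMap.add_apply, weightForm_comm ν μ,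
    weightForm_comm (twoRho α)]
  ring

/-- For dominant weights `ν < μ`, the difference of the two values is the pairing of the strictly
dominant weight `μ + ν + 2ρ` with a nonzero sum of simple roots. -/
lemma casimirValue_lt (hα : IsBase H α) (hcoroot : ∀ j, IsCoroot H (α j) (hc j))
    {μ ν : Module.Dual ℂ H} (hμ : IsDomInt hc μ) (hν : IsDomInt hc ν) {c : Fin r → ℕ}
    (hc0 : c ≠ 0) (hνμ : ν = μ - rootSum α c) : casimirValue α ν < casimirValue α μ := by
  have hpos (j : Fin r) : 0 < weightForm H (μ + ν + twoRho α) (α j) := by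
    obtain ⟨a, ha0, ha⟩ := (hα.isRoot j).exists_weight
    obtain ⟨m, hm⟩ := hμ j
    obtain ⟨n, hn⟩ := hν j
    have hcj : hc j = coroot a := (ha ▸ hcoroot j).eq_coroot
    rw [hcj] at hm hn
    rw [← ha, weightForm_root _ ha0]
    refine mul_pos ?_ (div_pos (weightForm_self_pos ha0) two_pos)
    rw [LinearMap.add_apply, LinearMap.add_apply, hα.twoRho_coroot ha, hm, hn]
    exact_mod_cast Nat.succ_pos _
  rw [← sub_pos, casimirValue_sub, hνμ, sub_sub_cancel, ← hνμ, rootSum_apply, map_sum]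
  obtain ⟨j, hj⟩ := Function.ne_iff.mp hc0
  refine Finset.sum_pos' (fun i _ ↦ ?_) ⟨j, Finset.mem_univ j, ?_⟩
  · rw [map_smul]
    exact mul_nonneg (Nat.cast_nonneg _) (hpos i).le
  · rw [map_smul]
    exact mul_pos (Nat.cast_pos.mpr (Nat.pos_of_ne_zero hj)) (hpos j)

end Positivity

section Irreducibility

open LieAlgebra.IsKilling
open scoped ComplexOrder

variable {H : LieSubalgebra ℂ L} [H.IsCartanSubalgebra] {r : ℕ} {α : Fin r → Module.Dual ℂ H}
  {hc : Fin r → H}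

lemma IsCoroot.exists_isSl2Triple [FiniteDimensional ℂ L] [IsKilling ℂ L] {χ : Module.Dual ℂ H}
    {t : H} (ht : IsCoroot H χ t) :
    ∃ e ∈ rootSpace H ⇑χ, ∃ f ∈ rootSpace H ⇑(-χ), IsSl2Triple (t : L) e f := by
  obtain ⟨htwo, e, he, f, hf, hef⟩ := ht
  refine ⟨e, he, f, hf, ?_, hef.symm, ?_, ?_⟩
  · rw [ne_eq, ZeroMemClass.coe_eq_zero]
    rintro rfl
    simp at htwo
  · have hte : ⁅(t : L), e⁆ = χ t • e := lie_eq_smul_of_mem_rootSpace he t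
    rw [hte, htwo, ← Nat.cast_smul_eq_nsmul ℂ, Nat.cast_two]
  · have htf : ⁅(t : L), f⁆ = (-χ) t • f := lie_eq_smul_of_mem_rootSpace hf t
    rw [htf, LinearMap.neg_apply, htwo, ← Nat.cast_smul_eq_nsmul ℂ, Nat.cast_two, neg_smul]

section Prod

variable {V W : Type*} [AddCommGroup V] [Module ℂ V] [LieRingModule L V]
  [AddCommGroup W] [Module ℂ W] [LieRingModule L W]

/-- The componentwise action on the direct sum of two representations. -/
instance prodLieRingModule : LieRingModule L (V × W) where
  bracket x p := (⁅x, p.1⁆, ⁅x, p.2⁆)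
  add_lie x y p := Prod.ext (add_lie x y p.1) (add_lie x y p.2)
  lie_add x p q := Prod.ext (lie_add x p.1 q.1) (lie_add x p.2 q.2)
  leibniz_lie x y p := Prod.ext (leibniz_lie x y p.1) (leibniz_lie x y p.2)

instance prodLieModule [LieModule ℂ L V] [LieModule ℂ L W] : LieModule ℂ L (V × W) where
  smul_lie a x p := Prod.ext (smul_lie a x p.1) (smul_lie a x p.2)
  lie_smul a x p := Prod.ext (lie_smul a x p.1) (lie_smul a x p.2)

variable (L V W) in
/-- The first projection of a direct sum of representations. -/
def lieFst : V × W →ₗ⁅ℂ,L⁆ V where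
  __ := LinearMap.fst ℂ V W
  map_lie' := rfl

variable (L V W) in
/-- The second projection of a direct sum of representations. -/
def lieSnd : V × W →ₗ⁅ℂ,L⁆ W where
  __ := LinearMap.snd ℂ V W
  map_lie' := rfl

variable [LieModule ℂ L V] [LieModule ℂ L W] {μ : Module.Dual ℂ H} {v : V} {w : W}

lemma IsHighestWeightVector.prodMk (hv : IsHighestWeightVector H α μ v)
    (hw : IsHighestWeightVector H α μ w) : IsHighestWeightVector H α μ (v, w) where
  ne_zero h := hv.ne_zero (congrArg Prod.fst h)
  mem_weightSubmodule h := Prod.ext (hv.mem_weightSubmodule h) (hw.mem_weightSubmodule h)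
  lie_eq_zero χ hχ e he := Prod.ext (hv.lie_eq_zero χ hχ e he) (hw.lie_eq_zero χ hχ e he)

end Prod

variable [FiniteDimensional ℂ L] [IsKilling ℂ L]
variable {V W : Type*} [AddCommGroup V] [Module ℂ V] [LieRingModule L V] [LieModule ℂ L V]
  [AddCommGroup W] [Module ℂ W] [LieRingModule L W] [LieModule ℂ L W]

namespace IsHighestWeightVector

variable {μ : Module.Dual ℂ H} {v : V} {w : W}

lemma casimir_eq_of_mem_lieSpan (hw : IsHighestWeightVector H α μ w) (hα : IsBase H α) {x : W}
    (hx : x ∈ LieSubmodule.lieSpan ℂ L {w}) :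
    casimir (rootBasis H) W x = casimirValue α μ • x := by
  have hle : LieSubmodule.lieSpan ℂ L {w} ≤
      (casimir (rootBasis H) W - casimirValue α μ • LieModuleHom.id).ker :=
    LieSubmodule.lieSpan_le.mpr (by simpa [sub_eq_zero] using hw.casimir_eq hα)
  simpa [sub_eq_zero] using hle hx

lemma casimirValue_eq_of_mem_lieSpan (hw : IsHighestWeightVector H α μ w) (hα : IsBase H α)
    {β : Fin r → Module.Dual ℂ H} (hβ : IsBase H β) {ν : Module.Dual ℂ H} {x : W}
    (hx : IsHighestWeightVector H β ν x) (hxw : x ∈ LieSubmodule.lieSpan ℂ L {w}) :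
    casimirValue β ν = casimirValue α μ :=
  smul_left_injective ℂ hx.ne_zero <|
    (hx.casimir_eq hβ).symm.trans (hw.casimir_eq_of_mem_lieSpan hα hxw)

variable [FiniteDimensional ℂ W]

lemma isDomInt (hw : IsHighestWeightVector H α μ w) (hα : IsBase H α)
    (hcoroot : ∀ j, IsCoroot H (α j) (hc j)) : IsDomInt hc μ := by
  intro j
  obtain ⟨e, he, f, -, htriple⟩ := (hcoroot j).exists_isSl2Triple
  have hprim : htriple.HasPrimitiveVectorWith w (μ (hc j)) :=
    ⟨hw.ne_zero, hw.mem_weightSubmodule (hc j), hw.lie_eq_zero _ (hα.isPosRoot_simple j) e he⟩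
  exact hprim.exists_nat

/-- The highest weight of a submodule of `U(L)w` lies below `μ` and has the same Casimir value, so
it is `μ` itself. -/
lemma mem_of_le_lieSpan (hw : IsHighestWeightVector H α μ w) (hα : IsBase H α)
    (hcoroot : ∀ j, IsCoroot H (α j) (hc j)) {N : LieSubmodule ℂ L W} (hN0 : N ≠ ⊥)
    (hN : N ≤ LieSubmodule.lieSpan ℂ L {w}) : w ∈ N := by
  have := (LieSubmodule.nontrivial_iff_ne_bot ℂ L W).mpr hN0
  obtain ⟨ν, x, hx⟩ := hα.exists_isHighestWeightVector (W := N)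
  have hx' : IsHighestWeightVector H α ν (x : W) := hx.map (φ := N.incl) (by simpa using hx.ne_zero)
  have hxw := hw.lieSpan_le hα (hN x.2)
  obtain ⟨c, hc⟩ := exists_eq_sub_rootSum_of_mem_span_sup_weightsBelow hw.mem_weightSubmodule
    hx'.mem_weightSubmodule hx'.ne_zero hxw
  obtain rfl : c = 0 := by
    by_contra hc0
    exact (casimirValue_lt hα hcoroot (hw.isDomInt hα hcoroot) (hx'.isDomInt hα hcoroot) hc0
      hc).ne (hw.casimirValue_eq_of_mem_lieSpan hα hα hx' (hN x.2))
  obtain rfl : ν = μ := by simpa using hc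
  obtain ⟨a, ha⟩ := exists_eq_smul_of_mem_span_sup_weightsBelow hα hw.mem_weightSubmodule
    hx'.mem_weightSubmodule hxw
  have ha0 : a ≠ 0 := by
    rintro rfl
    exact hx'.ne_zero (by simpa using ha)
  rw [← inv_smul_smul₀ ha0 w, ← ha]
  exact N.smul_mem _ x.2

/-- The submodule of `V × W` generated by `(v, w)` is the graph of the homomorphism. -/
lemma exists_lieModuleHom [FiniteDimensional ℂ V] [LieModule.IsIrreducible ℂ L V]
    (hv : IsHighestWeightVector H α μ v) (hw : IsHighestWeightVector H α μ w) (hα : IsBase H α)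
    (hcoroot : ∀ j, IsCoroot H (α j) (hc j)) : ∃ φ : V →ₗ⁅ℂ,L⁆ W, φ v = w := by
  let graph := LieSubmodule.lieSpan ℂ L {(v, w)}
  have hmem : (v, w) ∈ graph := LieSubmodule.subset_lieSpan rfl
  let π : graph →ₗ⁅ℂ,L⁆ V := (lieFst L V W).comp graph.incl
  have hinj : Function.Injective π := by
    have hker : (lieFst L V W).ker ⊓ graph = ⊥ := by
      by_contra hne
      exact hv.ne_zero ((hv.prodMk hw).mem_of_le_lieSpan hα hcoroot hne inf_le_right).1
    refine (injective_iff_map_eq_zero π).mpr fun p hp ↦ Subtype.ext ?_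
    simpa [hker] using (show (p : V × W) ∈ (lieFst L V W).ker ⊓ graph from ⟨hp, p.2⟩)
  have hsurj : Function.Surjective π := by
    rw [← LieModuleHom.range_eq_top]
    refine (IsSimpleOrder.eq_bot_or_eq_top _).resolve_left fun h ↦ hv.ne_zero ?_
    have hrange : v ∈ π.range := (π.mem_range v).mpr ⟨⟨(v, w), hmem⟩, rfl⟩
    rwa [h, LieSubmodule.mem_bot] at hrange
  let e : graph ≃ₗ⁅ℂ,L⁆ V := { π, LinearEquiv.ofBijective π.toLinearMap ⟨hinj, hsurj⟩ with }
  have he : e.symm v = ⟨(v, w), hmem⟩ := e.symm_apply_eq.mpr rfl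
  exact ⟨((lieSnd L V W).comp graph.incl).comp e.symm, congrArg ((lieSnd L V W).comp graph.incl) he⟩

end IsHighestWeightVector

end Irreducibility

section LowestWeights

open scoped ComplexOrder

variable {H : LieSubalgebra ℂ L} [H.IsCartanSubalgebra] {r : ℕ} {α : Fin r → Module.Dual ℂ H}
  {hc : Fin r → H}
variable {V W : Type*} [AddCommGroup V] [Module ℂ V] [LieRingModule L V] [LieModule ℂ L V]
  [LieModule.IsIrreducible ℂ L V]
  [AddCommGroup W] [Module ℂ W] [LieRingModule L W] [LieModule ℂ L W]

variable [FiniteDimensional ℂ L] [IsKilling ℂ L] [FiniteDimensional ℂ V] [FiniteDimensional ℂ W]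

/-- The lowest weight of `V` lies above `l` since `V` embeds into `W`. If it were different, the
Casimir value of `l` would exceed that of `μ`, but it is also the value of a highest weight `ν ≤ μ`
of the submodule generated by `s`. -/
lemma lowestWeight_eq (hα : IsBase H α) (hcoroot : ∀ j, IsCoroot H (α j) (hc j))
    {μ l l' : Module.Dual ℂ H} {v u : V} {t s : W} (hv : IsHighestWeightVector H α μ v)
    (hu : IsHighestWeightVector H (-α) l' u) (ht : IsTopVector H α μ t)
    (hs : IsTopVector H (-α) l s) : l' = l := by
  have hcoroot' (j : Fin r) : IsCoroot H ((-α) j) ((-hc) j) := (hcoroot j).neg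
  have ht' := ht.isHighestWeightVector hα
  have hs' := hs.isHighestWeightVector hα.neg
  obtain ⟨φ, hφ⟩ := hv.exists_lieModuleHom ht' hα hcoroot
  have hφu : φ u ≠ 0 := fun h ↦ by
    have hker : LieSubmodule.lieSpan ℂ L {u} ≤ φ.ker :=
      LieSubmodule.lieSpan_le.mpr (Set.singleton_subset_iff.mpr h)
    rw [hu.lieSpan_eq_top] at hker
    exact ht.ne_zero (hφ ▸ hker (LieSubmodule.mem_top v))
  obtain ⟨c, hc⟩ := hs.exists_eq_sub_rootSum (map_mem_weightSubmodule φ hu.mem_weightSubmodule) hφu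
  suffices c = 0 by simpa [this] using hc
  by_contra hc0
  have hlt := casimirValue_lt hα.neg hcoroot' (hs'.isDomInt hα.neg hcoroot')
    (hu.isDomInt hα.neg hcoroot') hc0 hc
  have hV : casimirValue (-α) l' = casimirValue α μ :=
    hv.casimirValue_eq_of_mem_lieSpan hα hα.neg hu (hv.lieSpan_eq_top ▸ LieSubmodule.mem_top u)
  have : Nontrivial (LieSubmodule.lieSpan ℂ L {s}) :=
    ⟨⟨s, LieSubmodule.subset_lieSpan rfl⟩, 0, fun h ↦ hs.ne_zero (congrArg Subtype.val h)⟩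
  obtain ⟨ν, x, hx⟩ := hα.exists_isHighestWeightVector (W := LieSubmodule.lieSpan ℂ L {s})
  have hx' : IsHighestWeightVector H α ν (x : W) :=
    hx.map (φ := LieSubmodule.incl _) (by simpa using hx.ne_zero)
  have hν := hs'.casimirValue_eq_of_mem_lieSpan hα.neg hα hx' x.2
  obtain ⟨d, hd⟩ := ht.exists_eq_sub_rootSum hx'.mem_weightSubmodule hx'.ne_zero
  have hle : casimirValue α ν ≤ casimirValue α μ := by
    rcases eq_or_ne d 0 with rfl | hd0
    · simp [hd]
    · exact (casimirValue_lt hα hcoroot (ht'.isDomInt hα hcoroot) (hx'.isDomInt hα hcoroot) hd0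
        hd).le
  exact hlt.not_ge (hν ▸ hV ▸ hle)

end LowestWeights

section InvariantPairings

section Basic

variable {𝔤 V W : Type*} [LieRing 𝔤] [AddCommGroup V] [Module ℂ V] [LieRingModule 𝔤 V]
  [AddCommGroup W] [Module ℂ W] [LieRingModule 𝔤 W]

variable (𝔤) in
/-- The bilinear pairing `B` between two representations is invariant. -/
def IsInvariantPairing (B : W →ₗ[ℂ] V →ₗ[ℂ] ℂ) : Prop :=
  ∀ (x : 𝔤) (w : W) (v : V), B ⁅x, w⁆ v + B w ⁅x, v⁆ = 0

namespace IsInvariantPairing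

variable {B B' : W →ₗ[ℂ] V →ₗ[ℂ] ℂ}

lemma apply_lie (hB : IsInvariantPairing 𝔤 B) (x : 𝔤) (w : W) (v : V) :
    B w ⁅x, v⁆ = -B ⁅x, w⁆ v :=
  (neg_eq_of_add_eq_zero_right (hB x w v)).symm

lemma sub_smul (hB : IsInvariantPairing 𝔤 B) (hB' : IsInvariantPairing 𝔤 B') (a : ℂ) :
    IsInvariantPairing 𝔤 (B - a • B') := by
  intro x w v
  simp [hB.apply_lie, hB'.apply_lie]

lemma flip (hB : IsInvariantPairing 𝔤 B) : IsInvariantPairing 𝔤 B.flip := by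
  intro x w v
  simp [hB.apply_lie]

lemma comp {T : Type*} [AddCommGroup T] [Module ℂ T] [LieRingModule 𝔤 T]
    (hB : IsInvariantPairing 𝔤 B) (φ : T →ₗ⁅ℂ,𝔤⁆ W) :
    IsInvariantPairing 𝔤 (B ∘ₗ φ.toLinearMap) := by
  intro x t v
  simpa using hB x (φ t) v

end IsInvariantPairing

end Basic

lemma IsHighestWeightVector.ne_zero_of_separatingLeft {H : LieSubalgebra ℂ L}
    [H.IsCartanSubalgebra] {r : ℕ} {α : Fin r → Module.Dual ℂ H} {μ : Module.Dual ℂ H}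
    {V W : Type*} [AddCommGroup V] [Module ℂ V] [AddCommGroup W] [Module ℂ W] [LieRingModule L W]
    [LieModule ℂ L W] {w : W} {B : W →ₗ[ℂ] V →ₗ[ℂ] ℂ} (hw : IsHighestWeightVector H α μ w)
    (hsep : B.SeparatingLeft) : B ≠ 0 := by
  rintro rfl
  exact hw.ne_zero (hsep w fun _ ↦ rfl)

/-- Raising operators move from `W` to `V`, where they kill `v`. -/
lemma IsHighestWeightVector.eq_zero_of_bilinear_apply_eq_zero {H : LieSubalgebra ℂ L}
    [H.IsCartanSubalgebra] [FiniteDimensional ℂ L] [IsKilling ℂ L] {r : ℕ}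
    {α : Fin r → Module.Dual ℂ H} {μ l : Module.Dual ℂ H}
    {V W M : Type*} [AddCommGroup V] [Module ℂ V] [LieRingModule L V] [LieModule ℂ L V]
    [LieModule.IsIrreducible ℂ L V] [AddCommGroup W] [Module ℂ W] [LieRingModule L W]
    [LieModule ℂ L W] [LieModule.IsIrreducible ℂ L W] [AddCommGroup M] [Module ℂ M] {v : V} {u : W}
    (hv : IsHighestWeightVector H α μ v) (hα : IsBase H α)
    (hu : IsHighestWeightVector H (-α) l u) {f : V →ₗ[ℂ] W →ₗ[ℂ] M} {D : L → M →ₗ[ℂ] M}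
    (hf : ∀ x a b, f ⁅x, a⁆ b + f a ⁅x, b⁆ = D x (f a b)) (hvu : f v u = 0) : f = 0 := by
  have hv0 : f v = 0 := by
    rw [← LinearMap.ker_eq_top, ← top_le_iff]
    have := hu.lieSpan_le_of_lowering hα.neg (P := (f v).ker) hvu fun χ hχ e he b hb ↦ by
      have heb := hf e v b
      rwa [hv.lie_eq_zero _ (isPosRoot_neg_base_iff.mp hχ) e he, LinearMap.mem_ker.mp hb, map_zero,
        map_zero, LinearMap.zero_apply, zero_add] at heb
    rwa [hu.lieSpan_eq_top] at this
  let N : LieSubmodule ℂ L V :=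
    { f.ker with
      lie_mem {x a} ha := LinearMap.ext fun b ↦ by
        simpa [LinearMap.mem_ker.mp ha] using hf x a b }
  have hN : LieSubmodule.lieSpan ℂ L {v} ≤ N :=
    LieSubmodule.lieSpan_le.mpr (Set.singleton_subset_iff.mpr hv0)
  rw [hv.lieSpan_eq_top] at hN
  exact LinearMap.ext fun a ↦ hN (LieSubmodule.mem_top a)

namespace IsInvariantPairing

variable {V W : Type*} [AddCommGroup V] [Module ℂ V] [LieRingModule L V]
  [AddCommGroup W] [Module ℂ W] [LieRingModule L W] {B B' : W →ₗ[ℂ] V →ₗ[ℂ] ℂ}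
  [LieModule ℂ L V] [LieModule ℂ L W]
variable {H : LieSubalgebra ℂ L} {μ l : Module.Dual ℂ H} {w : W} {u : V}

lemma weight_eq_neg (hB : IsInvariantPairing L B) (hw : w ∈ weightSubmodule H W μ)
    (hu : u ∈ weightSubmodule H V l) (hwu : B w u ≠ 0) : l = -μ := by
  ext h
  have := hB h w u
  rw [hw, hu, map_smul, map_smul, LinearMap.smul_apply, ← add_smul] at this
  simpa [hwu, add_comm, eq_neg_iff_add_eq_zero] using this

variable [LieModule.IsIrreducible ℂ L V] [LieModule.IsIrreducible ℂ L W] [FiniteDimensional ℂ L]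
  [IsKilling ℂ L] [H.IsCartanSubalgebra] {r : ℕ} {α : Fin r → Module.Dual ℂ H}

lemma eq_zero_of_apply_eq_zero (hB : IsInvariantPairing L B) (hα : IsBase H α)
    (hw : IsHighestWeightVector H α μ w) (hu : IsHighestWeightVector H (-α) l u)
    (hwu : B w u = 0) : B = 0 :=
  hw.eq_zero_of_bilinear_apply_eq_zero hα hu (D := 0) hB hwu

lemma lowestWeight_eq_neg (hB : IsInvariantPairing L B) (hB0 : B ≠ 0) (hα : IsBase H α)
    (hw : IsHighestWeightVector H α μ w) (hu : IsHighestWeightVector H (-α) l u) : l = -μ :=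
  hB.weight_eq_neg hw.mem_weightSubmodule hu.mem_weightSubmodule
    fun h ↦ hB0 (hB.eq_zero_of_apply_eq_zero hα hw hu h)

lemma eq_smul (hB : IsInvariantPairing L B) (hB' : IsInvariantPairing L B') (hB0 : B ≠ 0)
    (hα : IsBase H α) (hw : IsHighestWeightVector H α μ w)
    (hu : IsHighestWeightVector H (-α) l u) : B' = (B' w u / B w u) • B := by
  have hwu : B w u ≠ 0 := fun h ↦ hB0 (hB.eq_zero_of_apply_eq_zero hα hw hu h)
  exact sub_eq_zero.mp ((hB'.sub_smul hB _).eq_zero_of_apply_eq_zero hα hw hu (by simp [hwu]))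

end IsInvariantPairing

end InvariantPairings

section FrobeniusSchur

variable {H : LieSubalgebra ℂ L} [H.IsCartanSubalgebra] {r : ℕ} {α : Fin r → Module.Dual ℂ H}
variable {V : Type*} [AddCommGroup V] [Module ℂ V] [LieRingModule L V] [LieModule ℂ L V]
  {μ l : Module.Dual ℂ H} {v u : V} {B B' : V →ₗ[ℂ] V →ₗ[ℂ] ℂ}

variable [FiniteDimensional ℂ L] [IsKilling ℂ L] [LieModule.IsIrreducible ℂ L V]

namespace IsInvariantPairing

lemma flip_eq_or_eq_neg (hB : IsInvariantPairing L B) (hB0 : B ≠ 0) (hα : IsBase H α)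
    (hv : IsHighestWeightVector H α μ v) (hu : IsHighestWeightVector H (-α) l u) :
    B.flip = B ∨ B.flip = -B := by
  obtain ⟨c, hc⟩ : ∃ c : ℂ, B.flip = c • B := ⟨_, hB.eq_smul hB.flip hB0 hα hv hu⟩
  have hcc : (c * c) • B = B := by
    ext a b
    have hab := LinearMap.congr_fun₂ hc a b
    have hba := LinearMap.congr_fun₂ hc b a
    simp only [LinearMap.flip_apply, LinearMap.smul_apply] at hab hba ⊢
    rw [mul_smul, ← hab, ← hba]
  have hc1 : c * c = 1 := smul_left_injective ℂ hB0 (by simpa using hcc)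
  rcases mul_self_eq_one_iff.mp hc1 with rfl | rfl
  · exact .inl (hc.trans (one_smul ℂ B))
  · exact .inr (hc.trans (neg_one_smul ℂ B))

lemma flip_eq_smul (hB : IsInvariantPairing L B) (hB' : IsInvariantPairing L B') (hB0 : B ≠ 0)
    (hα : IsBase H α) (hv : IsHighestWeightVector H α μ v)
    (hu : IsHighestWeightVector H (-α) l u) {z : ℂ} (hz : B.flip = z • B) :
    B'.flip = z • B' := by
  rw [hB.eq_smul hB' hB0 hα hv hu]
  ext a b
  have := LinearMap.congr_fun₂ hz a b
  simp only [LinearMap.flip_apply, LinearMap.smul_apply, smul_eq_mul] at this ⊢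
  rw [this, mul_left_comm]

end IsInvariantPairing

end FrobeniusSchur

section SelfDualTypes

variable [FiniteDimensional ℂ L] [IsKilling ℂ L]
variable {H : LieSubalgebra ℂ L} [H.IsCartanSubalgebra] {r : ℕ} {α : Fin r → Module.Dual ℂ H}
variable {V : Type} [AddCommGroup V] [Module ℂ V] [LieRingModule L V] [LieModule ℂ L V]
  [LieModule.IsIrreducible ℂ L V] {μ l : Module.Dual ℂ H} {v u : V} {B : V →ₗ[ℂ] V →ₗ[ℂ] ℂ}

namespace IsInvariantPairing

lemma isOrthogonalRep_iff (hB : IsInvariantPairing L B) (hsep : B.SeparatingLeft)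
    (hα : IsBase H α) (hv : IsHighestWeightVector H α μ v)
    (hu : IsHighestWeightVector H (-α) l u) : IsOrthogonalRep (L := L) V ↔ B.flip = B := by
  refine ⟨fun ⟨B', hsymm, hsep', hB'⟩ ↦ ?_, fun h ↦ ⟨B, fun a b ↦ ?_, hsep, hB⟩⟩
  · have hflip : B'.flip = (1 : ℂ) • B' := LinearMap.ext₂ fun a b ↦ by simp [hsymm b a]
    simpa using IsInvariantPairing.flip_eq_smul hB' hB (hv.ne_zero_of_separatingLeft hsep') hα hv hu
      hflip
  · exact (LinearMap.congr_fun₂ h a b).symm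

lemma isSymplecticRep_iff (hB : IsInvariantPairing L B) (hsep : B.SeparatingLeft)
    (hα : IsBase H α) (hv : IsHighestWeightVector H α μ v)
    (hu : IsHighestWeightVector H (-α) l u) : IsSymplecticRep (L := L) V ↔ B.flip = -B := by
  refine ⟨fun ⟨B', halt, hsep', hB'⟩ ↦ ?_, fun h ↦ ⟨B, fun a ↦ ?_, hsep, hB⟩⟩
  · have hflip : B'.flip = (-1 : ℂ) • B' := LinearMap.ext₂ fun a b ↦ by
      simp [(LinearMap.IsAlt.neg halt a b).symm]
    exact (IsInvariantPairing.flip_eq_smul hB' hB (hv.ne_zero_of_separatingLeft hsep') hα hv hu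
      hflip).trans (neg_one_smul ℂ B)
  · exact self_eq_neg.mp (LinearMap.congr_fun₂ h a a)

end IsInvariantPairing

end SelfDualTypes

section FundamentalWeights

open LieAlgebra.IsKilling

variable [FiniteDimensional ℂ L] [IsKilling ℂ L]
variable {H : LieSubalgebra ℂ L} [H.IsCartanSubalgebra] {r : ℕ} {α ϖ : Fin r → Module.Dual ℂ H}
  {hc : Fin r → H}

lemma IsBase.span_range_eq_top (hα : IsBase H α) : Submodule.span ℂ (Set.range α) = ⊤ := by
  have hmem (c : Fin r → ℕ) : ∑ j, (c j : ℂ) • α j ∈ Submodule.span ℂ (Set.range α) :=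
    Submodule.sum_smul_mem _ _ fun j _ ↦ Submodule.subset_span ⟨j, rfl⟩
  rw [← top_le_iff, ← span_weight_eq_top (K := ℂ) (L := L) (H := H), Submodule.span_le]
  rintro _ ⟨χ, rfl⟩
  by_cases hχ : χ.IsNonZero
  · rcases hα.pos_neg _ (isRoot_weight_toLinear χ hχ) with ⟨c, h⟩ | ⟨c, h⟩
    · exact h ▸ hmem c
    · exact h ▸ Submodule.neg_mem _ (hmem c)
  · have : Weight.toLinear ℂ H L χ = 0 := DFunLike.coe_injective (not_not.mp hχ)
    simp [this]

lemma IsBase.finrank_eq (hα : IsBase H α) : finrank ℂ H = r := by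
  rw [← Subspace.dual_finrank_eq, ← finrank_top, ← hα.span_range_eq_top,
    finrank_span_eq_card hα.indep, Fintype.card_fin]

lemma IsBase.weight_ext (hα : IsBase H α)
    (hϖ : ∀ j k, ϖ j (hc k) = if j = k then (1 : ℂ) else 0) {χ ψ : Module.Dual ℂ H}
    (h : ∀ j, χ (hc j) = ψ (hc j)) : χ = ψ := by
  have hindep : LinearIndependent ℂ hc :=
    .of_pairwise_dual_eq_zero_one hc ϖ (fun j k hjk ↦ by simp [hϖ, hjk]) fun j ↦ by simp [hϖ]
  refine LinearMap.ext_on_range (hindep.span_eq_top_of_card_eq_finrank' ?_) h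
  rw [hα.finrank_eq, Fintype.card_fin]

lemma IsDomInt.sub_mem_closure {μ : Module.Dual ℂ H} (hμ : IsDomInt hc μ) (hα : IsBase H α)
    (hϖ : ∀ j k, ϖ j (hc k) = if j = k then (1 : ℂ) else 0) {j : Fin r} (hj : μ (hc j) ≠ 0) :
    μ - ϖ j ∈ AddSubmonoid.closure (Set.range ϖ) := by
  choose n hn using hμ
  have hnj : 1 ≤ n j := Nat.one_le_iff_ne_zero.mpr fun h ↦ hj (by simp [hn, h])
  let c : Fin r → ℕ := n - Pi.single j 1
  have hsum : μ - ϖ j = ∑ k, c k • ϖ k := by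
    refine hα.weight_ext hϖ fun k ↦ ?_
    rcases eq_or_ne k j with rfl | hkj
    · simp [c, hϖ, hn, hnj]
    · simp [c, hϖ, hn, hkj, hkj.symm]
  exact hsum ▸ sum_mem fun k _ ↦ nsmul_mem (AddSubmonoid.subset_closure (Set.mem_range_self k)) _

end FundamentalWeights

section EquivariantOperators

variable {T S : Type*} [AddCommGroup T] [Module ℂ T] [LieRingModule L T] [LieModule ℂ L T]
  [AddCommGroup S] [Module ℂ S] [LieRingModule L S] [LieModule ℂ L S]

variable (L T) in
/-- The action of `L` on `T`, as an equivariant map from the adjoint representation. -/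
def toEndHom : L →ₗ⁅ℂ,L⁆ T →ₗ[ℂ] T where
  __ := (toEnd ℂ L T : L →ₗ[ℂ] Module.End ℂ T)
  map_lie' {x y} := LinearMap.ext fun t ↦ by simp [LieHom.lie_apply]

variable (L T S) in
/-- The extension of operators on `T` to `T ⊗ S`, with trivial effect on `S`. -/
noncomputable def rTensorEndHom : (T →ₗ[ℂ] T) →ₗ⁅ℂ,L⁆ (T ⊗[ℂ] S) →ₗ[ℂ] (T ⊗[ℂ] S) where
  __ := LinearMap.rTensorHom S
  map_lie' {x φ} := TensorProduct.ext' fun t s ↦ by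
    simp [LieHom.lie_apply, TensorProduct.LieModule.lie_tmul_right, TensorProduct.sub_tmul]

variable {H : LieSubalgebra ℂ L} [H.IsCartanSubalgebra] {r : ℕ} {α : Fin r → Module.Dual ℂ H}

/-- The extremal vectors `t` and `s` of `T`, of weights `μ` and `l`, are eigenvectors of the
operators `ρ h` with eigenvalues `ϖ h` and `-ϖ' h`. -/
structure HasExtremalEigenvectors (H : LieSubalgebra ℂ L) [H.IsCartanSubalgebra]
    (α : Fin r → Module.Dual ℂ H) (ρ : L →ₗ⁅ℂ,L⁆ T →ₗ[ℂ] T) (μ l ϖ ϖ' : Module.Dual ℂ H)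
    (t s : T) : Prop where
  isTopVector : IsTopVector H α μ t
  isTopVector_neg : IsTopVector H (-α) l s
  apply_top (h : H) : ρ h t = ϖ h • t
  apply_bottom (h : H) : ρ h s = -ϖ' h • s

namespace HasExtremalEigenvectors

variable {ρ : L →ₗ⁅ℂ,L⁆ T →ₗ[ℂ] T} {μ l ϖ ϖ' : Module.Dual ℂ H} {t s : T}

lemma rTensor (h : HasExtremalEigenvectors H α ρ μ l ϖ ϖ' t s) {ν n : Module.Dual ℂ H} {t' s' : S}
    (ht' : IsTopVector H α ν t') (hs' : IsTopVector H (-α) n s') :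
    HasExtremalEigenvectors H α ((rTensorEndHom L T S).comp ρ) (μ + ν) (l + n) ϖ ϖ'
      (t ⊗ₜ t') (s ⊗ₜ s') where
  isTopVector := h.isTopVector.tmul ht'
  isTopVector_neg := h.isTopVector_neg.tmul hs'
  apply_top x := by
    change ρ x t ⊗ₜ t' = _
    rw [h.apply_top, TensorProduct.smul_tmul']
  apply_bottom x := by
    change ρ x s ⊗ₜ s' = _
    rw [h.apply_bottom, TensorProduct.smul_tmul']

variable [FiniteDimensional ℂ L] [IsKilling ℂ L]

lemma toEndHom [LieModule.IsIrreducible ℂ L T] (hα : IsBase H α)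
    (ht : IsHighestWeightVector H α ϖ t) (hs : IsHighestWeightVector H (-α) (-ϖ') s) :
    HasExtremalEigenvectors H α (toEndHom L T) ϖ (-ϖ') ϖ ϖ' t s where
  isTopVector := ht.isTopVector hα
  isTopVector_neg := hs.isTopVector hα.neg
  apply_top := ht.mem_weightSubmodule
  apply_bottom := hs.mem_weightSubmodule

end HasExtremalEigenvectors

lemma IsHWIrrep.exists_isHighestWeightVector {μ : Module.Dual ℂ H} {V : Type} [AddCommGroup V]
    [Module ℂ V] [LieRingModule L V] [LieModule ℂ L V] (hV : IsHWIrrep H α μ V) :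
    ∃ v : V, IsHighestWeightVector H α μ v :=
  let ⟨v, hv0, hv, he⟩ := hV.2
  ⟨v, hv0, hv, he⟩

variable [FiniteDimensional ℂ L] [IsKilling ℂ L]

lemma IsDualPair.exists_isHighestWeightVector_neg {V W : Type} [AddCommGroup V] [Module ℂ V]
    [LieRingModule L V] [LieModule ℂ L V] [LieModule.IsIrreducible ℂ L V] [FiniteDimensional ℂ V]
    [AddCommGroup W] [Module ℂ W] [LieRingModule L W] [LieModule ℂ L W]
    [LieModule.IsIrreducible ℂ L W] (hWV : IsDualPair (L := L) W V) (hα : IsBase H α)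
    {μ : Module.Dual ℂ H} {w : W} (hw : IsHighestWeightVector H α μ w) :
    ∃ u : V, IsHighestWeightVector H (-α) (-μ) u := by
  obtain ⟨B, hsep, -, hB⟩ := hWV
  have := LieModule.nontrivial_of_isIrreducible ℂ L V
  obtain ⟨l, u, hu⟩ := hα.neg.exists_isHighestWeightVector (W := V)
  obtain rfl := IsInvariantPairing.lowestWeight_eq_neg hB (hw.ne_zero_of_separatingLeft hsep) hα
    hw hu
  exact ⟨u, hu⟩

lemma exists_hasExtremalEigenvectors (hα : IsBase H α) {ϖ : Fin r → Module.Dual ℂ H}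
    {F : Fin r → Type} [∀ j, AddCommGroup (F j)] [∀ j, Module ℂ (F j)]
    [∀ j, LieRingModule L (F j)] [∀ j, LieModule ℂ L (F j)] [∀ j, FiniteDimensional ℂ (F j)]
    (hF : ∀ j, IsHWIrrep H α (ϖ j) (F j)) {ν : Module.Dual ℂ H}
    (hν : ν ∈ AddSubmonoid.closure (Set.range ϖ)) {j : Fin r} {ϖ' : Module.Dual ℂ H} {s : F j}
    (hs : IsHighestWeightVector H (-α) (-ϖ') s) :
    ∃ (T : Type) (_ : AddCommGroup T) (_ : Module ℂ T) (_ : LieRingModule L T)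
      (_ : LieModule ℂ L T) (_ : FiniteDimensional ℂ T) (ρ : L →ₗ⁅ℂ,L⁆ T →ₗ[ℂ] T)
      (l : Module.Dual ℂ H) (t s : T),
      HasExtremalEigenvectors H α ρ (ϖ j + ν) l (ϖ j) ϖ' t s := by
  have (k : Fin r) : LieModule.IsIrreducible ℂ L (F k) := (hF k).1
  choose t ht using fun k ↦ (hF k).exists_isHighestWeightVector
  induction hν using AddSubmonoid.closure_induction_right with
  | zero =>
    exact ⟨F j, inferInstance, inferInstance, inferInstance, inferInstance, inferInstance,
      toEndHom L (F j), -ϖ', t j, s, by simpa using .toEndHom hα (ht j) hs⟩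
  | add_right ν _ _ hk ih =>
    obtain ⟨k, rfl⟩ := hk
    obtain ⟨T, _, _, _, _, _, ρ, l, t₀, s₀, h⟩ := ih
    have := LieModule.nontrivial_of_isIrreducible ℂ L (F k)
    obtain ⟨n, s', hs'⟩ := hα.neg.exists_isHighestWeightVector (W := F k)
    refine ⟨T ⊗[ℂ] F k, inferInstance, inferInstance, inferInstance, inferInstance, inferInstance,
      (rTensorEndHom L T (F k)).comp ρ, l + n, t₀ ⊗ₜ t k, s₀ ⊗ₜ s', ?_⟩
    rw [← add_assoc]
    exact h.rTensor ((ht k).isTopVector hα) (hs'.isTopVector hα.neg)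

end EquivariantOperators

section MatrixCoefficients

section Basic

variable {T V : Type*} [AddCommGroup T] [Module ℂ T] [LieRingModule L T] [LieModule ℂ L T]
  [AddCommGroup V] [Module ℂ V] [LieRingModule L V]

lemma isInvariantPairing_flip_dualHom (φ : V →ₗ⁅ℂ,L⁆ Module.Dual ℂ T) :
    IsInvariantPairing L φ.toLinearMap.flip := by
  intro x t v
  simp

/-- The linear functional `θ` on a representation is invariant. -/
def IsInvariantFunctional (𝔤 : Type*) [LieRing 𝔤] {M : Type*} [AddCommGroup M] [Module ℂ M]
    [LieRingModule 𝔤 M] (θ : M →ₗ[ℂ] ℂ) : Prop :=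
  ∀ (x : 𝔤) (m : M), θ ⁅x, m⁆ = 0

/-- The functional `y ⊗ (a ⊗ b) ↦ A (ρ y (i a)) b`. -/
noncomputable def matrixCoefficient (ρ : L →ₗ⁅ℂ,L⁆ T →ₗ[ℂ] T) (i : V →ₗ⁅ℂ,L⁆ T)
    (A : T →ₗ[ℂ] V →ₗ[ℂ] ℂ) : L ⊗[ℂ] (V ⊗[ℂ] V) →ₗ[ℂ] ℂ :=
  TensorProduct.lift (A ∘ₗ TensorProduct.lift (LinearMap.lcomp ℂ T i.toLinearMap ∘ₗ ρ.toLinearMap))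
    ∘ₗ (TensorProduct.assoc ℂ L V V).symm.toLinearMap

lemma matrixCoefficient_tmul (ρ : L →ₗ⁅ℂ,L⁆ T →ₗ[ℂ] T) (i : V →ₗ⁅ℂ,L⁆ T)
    (A : T →ₗ[ℂ] V →ₗ[ℂ] ℂ) (y : L) (a b : V) :
    matrixCoefficient ρ i A (y ⊗ₜ (a ⊗ₜ b)) = A (ρ y (i a)) b := rfl

variable [LieModule ℂ L V]

lemma isInvariantFunctional_tmul_iff {W : Type*} [AddCommGroup W] [Module ℂ W] [LieRingModule L W]
    [LieModule ℂ L W] {θ : L ⊗[ℂ] (V ⊗[ℂ] W) →ₗ[ℂ] ℂ} :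
    IsInvariantFunctional L θ ↔ ∀ (x y : L) (a : V) (b : W),
      θ (⁅x, y⁆ ⊗ₜ (a ⊗ₜ b)) + (θ (y ⊗ₜ (⁅x, a⁆ ⊗ₜ b)) + θ (y ⊗ₜ (a ⊗ₜ ⁅x, b⁆))) = 0 := by
  have hlie (x y : L) (a : V) (b : W) :
      θ ⁅x, y ⊗ₜ[ℂ] (a ⊗ₜ[ℂ] b)⁆ =
        θ (⁅x, y⁆ ⊗ₜ (a ⊗ₜ b)) + (θ (y ⊗ₜ (⁅x, a⁆ ⊗ₜ b)) + θ (y ⊗ₜ (a ⊗ₜ ⁅x, b⁆))) := by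
    simp [TensorProduct.LieModule.lie_tmul_right, TensorProduct.tmul_add]
  refine ⟨fun h x y a b ↦ hlie x y a b ▸ h x _, fun h x m ↦ ?_⟩
  have hzero : θ ∘ₗ toEnd ℂ L (L ⊗[ℂ] (V ⊗[ℂ] W)) x = 0 :=
    TensorProduct.ext_threefold' fun y a b ↦ (hlie x y a b).trans (h x y a b)
  exact LinearMap.congr_fun hzero m

lemma isInvariantFunctional_matrixCoefficient (ρ : L →ₗ⁅ℂ,L⁆ T →ₗ[ℂ] T) (i : V →ₗ⁅ℂ,L⁆ T)
    {A : T →ₗ[ℂ] V →ₗ[ℂ] ℂ} (hA : IsInvariantPairing L A) :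
    IsInvariantFunctional L (matrixCoefficient ρ i A) := by
  refine isInvariantFunctional_tmul_iff.mpr fun x y a b ↦ ?_
  have hρ : ρ ⁅x, y⁆ (i a) = ⁅x, ρ y (i a)⁆ - ρ y ⁅x, i a⁆ := by simp [LieHom.lie_apply]
  simp only [matrixCoefficient_tmul, hρ, i.map_lie, hA.apply_lie, map_sub,
    LinearMap.sub_apply]
  ring

end Basic

variable [FiniteDimensional ℂ L] [IsKilling ℂ L]
variable {H : LieSubalgebra ℂ L} [H.IsCartanSubalgebra] {r : ℕ} {α : Fin r → Module.Dual ℂ H}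
  {hc : Fin r → H}
variable {T V : Type*} [AddCommGroup T] [Module ℂ T] [LieRingModule L T] [LieModule ℂ L T]
  [FiniteDimensional ℂ T] [AddCommGroup V] [Module ℂ V] [LieRingModule L V] [LieModule ℂ L V]
  [FiniteDimensional ℂ V] [LieModule.IsIrreducible ℂ L V]

/-- With `V` embedded into both `T` and the dual of `T`, the functional is a matrix coefficient
of `ρ`. -/
lemma HasExtremalEigenvectors.exists_isInvariantFunctional {ρ : L →ₗ⁅ℂ,L⁆ T →ₗ[ℂ] T}
    {μ l ϖ ϖ' : Module.Dual ℂ H} {t s : T} (h : HasExtremalEigenvectors H α ρ μ l ϖ ϖ' t s)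
    (hα : IsBase H α) (hcoroot : ∀ j, IsCoroot H (α j) (hc j)) {v u : V}
    (hv : IsHighestWeightVector H α μ v) (hu : IsHighestWeightVector H (-α) (-μ) u)
    {B : V →ₗ[ℂ] V →ₗ[ℂ] ℂ} (hB : IsInvariantPairing L B) (hB0 : B ≠ 0) {z : ℂ}
    (hz : B.flip = z • B) :
    ∃ θ : L ⊗[ℂ] (V ⊗[ℂ] V) →ₗ[ℂ] ℂ, IsInvariantFunctional L θ ∧
      (∀ x : H, θ ((x : L) ⊗ₜ (v ⊗ₜ u)) = ϖ x) ∧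
      ∀ x : H, θ ((x : L) ⊗ₜ (u ⊗ₜ v)) = -z * ϖ' x := by
  have hcoroot' (j : Fin r) : IsCoroot H ((-α) j) ((-hc) j) := (hcoroot j).neg
  obtain ⟨ψ, hψt, hψ⟩ := h.isTopVector.exists_dual_vector hα
  obtain ⟨i, hi⟩ := hv.exists_lieModuleHom (h.isTopVector.isHighestWeightVector hα) hα hcoroot
  obtain ⟨i', hi'⟩ := hu.exists_lieModuleHom hψ hα.neg hcoroot'
  obtain rfl := lowestWeight_eq hα hcoroot hv hu h.isTopVector h.isTopVector_neg
  obtain ⟨a, ha⟩ := h.isTopVector_neg.exists_eq_smul hα.neg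
    (map_mem_weightSubmodule i hu.mem_weightSubmodule)
  have hA := isInvariantPairing_flip_dualHom i'
  have huv : i' v (i u) = z := by
    have hflip := hB.flip_eq_smul (hA.comp i) hB0 hα hv hu hz
    simpa [hi, hi', hψt] using LinearMap.congr_fun₂ hflip v u
  refine ⟨matrixCoefficient ρ i i'.toLinearMap.flip, isInvariantFunctional_matrixCoefficient ρ i hA,
    fun x ↦ ?_, fun x ↦ ?_⟩
  · simp [matrixCoefficient_tmul, hi, hi', h.apply_top, hψt]
  · have hρ : ρ x (i u) = -ϖ' x • i u := by
      rw [ha, map_smul, h.apply_bottom, smul_comm]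
    simp [matrixCoefficient_tmul, hρ, huv, mul_comm z]

end MatrixCoefficients

section InvariantFunctionals

open LieAlgebra.IsKilling

variable [FiniteDimensional ℂ L] [IsKilling ℂ L]
variable {H : LieSubalgebra ℂ L} [H.IsCartanSubalgebra] {r : ℕ} {α : Fin r → Module.Dual ℂ H}
  {hc : Fin r → H} {μ l : Module.Dual ℂ H}
variable {V W : Type*} [AddCommGroup V] [Module ℂ V] [LieRingModule L V] [LieModule ℂ L V]
  [AddCommGroup W] [Module ℂ W] [LieRingModule L W] [LieModule ℂ L W] {v : V} {u : W}
  {θ : L ⊗[ℂ] (V ⊗[ℂ] W) →ₗ[ℂ] ℂ}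

namespace IsInvariantFunctional

/-- A lowering operator of the simple root kills both `v` and `u`, and maps a raising operator to
the coroot. -/
lemma apply_coroot_eq_zero [FiniteDimensional ℂ V] (hθ : IsInvariantFunctional L θ)
    (hα : IsBase H α) (hcoroot : ∀ j, IsCoroot H (α j) (hc j))
    (hv : IsHighestWeightVector H α μ v) (hu : IsHighestWeightVector H (-α) l u) {j : Fin r}
    (hj : μ (hc j) = 0) : θ ((hc j : L) ⊗ₜ (v ⊗ₜ u)) = 0 := by
  obtain ⟨e, he, f, hf, htriple⟩ := (hcoroot j).exists_isSl2Triple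
  have hα' := hα.isPosRoot_simple j
  have hprim : htriple.HasPrimitiveVectorWith v (μ (hc j)) :=
    ⟨hv.ne_zero, hv.mem_weightSubmodule (hc j), hv.lie_eq_zero _ hα' e he⟩
  have hfv : ⁅f, v⁆ = 0 := by
    simpa using hprim.pow_toEnd_f_eq_zero_of_eq_nat (n := 0) (by simpa using hj)
  have hfe : ⁅f, e⁆ = -(hc j : L) := by rw [← lie_skew, htriple.lie_e_f]
  simpa [hfv, hfe, hu.lie_eq_zero_of_neg hα' hf, TensorProduct.neg_tmul] using
    isInvariantFunctional_tmul_iff.mp hθ f e v u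

lemma apply_rootVector_eq_zero (hθ : IsInvariantFunctional L θ)
    (hv : v ∈ weightSubmodule H V μ) (hu : u ∈ weightSubmodule H W (-μ)) {χ : Module.Dual ℂ H}
    (hχ : χ ≠ 0) {e : L} (he : e ∈ rootSpace H ⇑χ) : θ (e ⊗ₜ (v ⊗ₜ u)) = 0 := by
  obtain ⟨h, hh⟩ : ∃ h, χ h ≠ 0 := DFunLike.ne_iff.mp hχ
  have hhe : ⁅(h : L), e⁆ = χ h • e := lie_eq_smul_of_mem_rootSpace he h
  have := isInvariantFunctional_tmul_iff.mp hθ h e v u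
  simpa [hhe, hv h, hu h, ← TensorProduct.smul_tmul', TensorProduct.tmul_neg, hh] using this

lemma eq_zero_of_apply_coroot_eq_zero [LieModule.IsIrreducible ℂ L V]
    [LieModule.IsIrreducible ℂ L W] (hθ : IsInvariantFunctional L θ) (hα : IsBase H α)
    {ϖ : Fin r → Module.Dual ℂ H} (hϖ : ∀ j k, ϖ j (hc k) = if j = k then (1 : ℂ) else 0)
    (hv : IsHighestWeightVector H α μ v) (hu : IsHighestWeightVector H (-α) (-μ) u)
    (hzero : ∀ j, θ ((hc j : L) ⊗ₜ (v ⊗ₜ u)) = 0) : θ = 0 := by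
  let f : V →ₗ[ℂ] W →ₗ[ℂ] Module.Dual ℂ L :=
    TensorProduct.curry (TensorProduct.curry θ).flip
  have hf_apply (x : L) (a : V) (b : W) : f a b x = θ (x ⊗ₜ (a ⊗ₜ b)) := rfl
  have hcartan : f v u ∘ₗ H.toSubmodule.subtype = 0 := hα.weight_ext hϖ hzero
  have hvu : f v u = 0 := LinearMap.ker_eq_top.mp <| hα.eq_top_of_rootSpaces_le
    (LinearMap.congr_fun hcartan)
    (fun χ hχ e he ↦ hθ.apply_rootVector_eq_zero hv.mem_weightSubmodule hu.mem_weightSubmodule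
      hχ.1.1 he)
    (fun χ hχ e he ↦ hθ.apply_rootVector_eq_zero hv.mem_weightSubmodule hu.mem_weightSubmodule
      hχ.1.neg.1 he)
  have hf : f = 0 := hv.eq_zero_of_bilinear_apply_eq_zero hα hu
    (D := fun x ↦ -LinearMap.lcomp ℂ ℂ (toEnd ℂ L L x)) (fun x a b ↦ LinearMap.ext fun y ↦ ?_) hvu
  · exact TensorProduct.ext_threefold' fun x a b ↦ by
      rw [← hf_apply, hf]
      simp
  · simpa [hf_apply, eq_neg_iff_add_eq_zero, add_comm] using
      isInvariantFunctional_tmul_iff.mp hθ x y a b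

end IsInvariantFunctional

end InvariantFunctionals

section TensorPairings

variable {V₁ W₁ V₂ W₂ : Type*} [AddCommGroup V₁] [Module ℂ V₁] [AddCommGroup W₁] [Module ℂ W₁]
  [AddCommGroup V₂] [Module ℂ V₂] [AddCommGroup W₂] [Module ℂ W₂]

/-- The tensor product of two pairings, `(w₁ ⊗ w₂, v₁ ⊗ v₂) ↦ B₁ w₁ v₁ * B₂ w₂ v₂`. -/
noncomputable def tensorPairing (B₁ : W₁ →ₗ[ℂ] V₁ →ₗ[ℂ] ℂ) (B₂ : W₂ →ₗ[ℂ] V₂ →ₗ[ℂ] ℂ) :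
    W₁ ⊗[ℂ] W₂ →ₗ[ℂ] V₁ ⊗[ℂ] V₂ →ₗ[ℂ] ℂ :=
  TensorProduct.dualDistrib ℂ V₁ V₂ ∘ₗ TensorProduct.map B₁ B₂

variable {B₁ : W₁ →ₗ[ℂ] V₁ →ₗ[ℂ] ℂ} {B₂ : W₂ →ₗ[ℂ] V₂ →ₗ[ℂ] ℂ}

lemma tensorPairing_tmul (w₁ : W₁) (w₂ : W₂) (v₁ : V₁) (v₂ : V₂) :
    tensorPairing B₁ B₂ (w₁ ⊗ₜ w₂) (v₁ ⊗ₜ v₂) = B₁ w₁ v₁ * B₂ w₂ v₂ := rfl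

lemma bijective_tensorPairing [FiniteDimensional ℂ V₁] [FiniteDimensional ℂ V₂]
    (h₁ : Function.Bijective B₁) (h₂ : Function.Bijective B₂) :
    Function.Bijective (tensorPairing B₁ B₂) :=
  (TensorProduct.congr (.ofBijective B₁ h₁) (.ofBijective B₂ h₂) ≪≫ₗ
    TensorProduct.dualDistribEquiv ℂ V₁ V₂).bijective

lemma IsInvariantPairing.tensor [LieRingModule L V₁] [LieModule ℂ L V₁]
    [LieRingModule L W₁] [LieModule ℂ L W₁] [LieRingModule L V₂] [LieModule ℂ L V₂]
    [LieRingModule L W₂] [LieModule ℂ L W₂] (h₁ : IsInvariantPairing L B₁)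
    (h₂ : IsInvariantPairing L B₂) : IsInvariantPairing L (tensorPairing B₁ B₂) := by
  intro x w v
  induction w with
  | zero => simp
  | add w w' hw hw' =>
    simp only [lie_add, map_add, LinearMap.add_apply]
    linear_combination hw + hw'
  | tmul w₁ w₂ =>
    induction v with
    | zero => simp
    | add v v' hv hv' =>
      simp only [lie_add, map_add] at hv hv' ⊢
      linear_combination hv + hv'
    | tmul v₁ v₂ =>
      simp only [TensorProduct.LieModule.lie_tmul_right, map_add, LinearMap.add_apply,
        tensorPairing_tmul, h₁.apply_lie, h₂.apply_lie]
      ring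

lemma isInvariantPairing_killingForm : IsInvariantPairing L (killingForm ℂ L) := by
  intro x y y'
  rw [LieModule.traceForm_apply_lie_apply', neg_add_cancel]

lemma bijective_of_separatingLeft {V : Type*} [AddCommGroup V] [Module ℂ V]
    [FiniteDimensional ℂ V] {B : V →ₗ[ℂ] V →ₗ[ℂ] ℂ} (hB : B.SeparatingLeft) :
    Function.Bijective B :=
  (LinearMap.linearEquivOfInjective B (LinearMap.ker_eq_bot.mp
    (LinearMap.separatingLeft_iff_ker_eq_bot.mp hB)) Subspace.dual_finrank_eq.symm).bijective

variable {M : Type*} [AddCommGroup M] [Module ℂ M] [LieRingModule L M] [LieModule ℂ L M]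

lemma IsInvariantPairing.mem_maxTrivSubmodule_iff {N : Type*} [AddCommGroup N] [Module ℂ N]
    [LieRingModule L N] {E : M →ₗ[ℂ] N →ₗ[ℂ] ℂ} (hE : IsInvariantPairing L E)
    (hinj : Function.Injective E) {m : M} :
    m ∈ maxTrivSubmodule ℂ L M ↔ IsInvariantFunctional L (E m) := by
  simp only [mem_maxTrivSubmodule, IsInvariantFunctional, hE.apply_lie, neg_eq_zero,
    ← map_eq_zero_iff E hinj]
  exact forall_congr' fun x ↦ LinearMap.ext_iff

end TensorPairings

section Involutions

variable {K M : Type*} [Field K] [AddCommGroup M] [Module K M]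

section DualFamilies

variable {ι : Type*} [DecidableEq ι] {f : M →ₗ[K] ι → K} {w : ι → M}

lemma bijective_of_apply_eq_piSingle [Finite ι] (hf : Function.Injective f)
    (hw : ∀ i, f (w i) = Pi.single i 1) : Function.Bijective f := by
  cases nonempty_fintype ι
  refine ⟨hf, fun c ↦ ⟨∑ i, c i • w i, ?_⟩⟩
  simp [hw, ← Pi.single_smul', Finset.univ_sum_single]

lemma trace_eq_sum_of_apply_eq_piSingle [Fintype ι] (hf : Function.Injective f)
    (hw : ∀ i, f (w i) = Pi.single i 1) (S : M →ₗ[K] M) :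
    LinearMap.trace K M S = ∑ i, f (S (w i)) i := by
  let e := LinearEquiv.ofBijective f (bijective_of_apply_eq_piSingle hf hw)
  have he (i : ι) : e.symm (Pi.single i 1) = w i := e.symm_apply_eq.mpr (hw i).symm
  rw [LinearMap.trace_eq_matrix_trace K (Basis.ofEquivFun e)]
  simp [Matrix.trace, LinearMap.toMatrix_apply, he, e]

end DualFamilies

variable [NeZero (2 : K)]

lemma two_mul_finrank_ker_sub_id [FiniteDimensional K M] {S : M →ₗ[K] M}
    (hS : Function.Involutive S) :
    2 * (finrank K (LinearMap.ker (S - LinearMap.id)) : K) =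
      finrank K M + LinearMap.trace K M S := by
  have hproj : LinearMap.IsProj (LinearMap.ker (S - LinearMap.id))
      ((2⁻¹ : K) • (LinearMap.id + S)) := by
    refine ⟨fun x ↦ ?_, fun x hx ↦ ?_⟩
    · simp [hS x, add_comm]
    · have hSx : S x = x := sub_eq_zero.mp hx
      rw [LinearMap.smul_apply, LinearMap.add_apply, LinearMap.id_apply, hSx, ← two_smul K x,
        inv_smul_smul₀ two_ne_zero]
  rw [← hproj.trace, map_smul, map_add, LinearMap.trace_id, smul_eq_mul,
    mul_inv_cancel_left₀ two_ne_zero]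

lemma two_mul_finrank_inf_ker_sub_id {N : Submodule K M} [FiniteDimensional K N] {S : M →ₗ[K] M}
    (hS : Function.Involutive S) (hN : ∀ x ∈ N, S x ∈ N) :
    2 * (finrank K ↥(N ⊓ LinearMap.ker (S - LinearMap.id)) : K) =
      finrank K N + LinearMap.trace K N (S.restrict hN) := by
  have hker : (LinearMap.ker (S.restrict hN - LinearMap.id)).map N.subtype =
      N ⊓ LinearMap.ker (S - LinearMap.id) := by
    ext x
    simp [sub_eq_zero, Subtype.ext_iff, and_comm]
  rw [← two_mul_finrank_ker_sub_id fun x ↦ Subtype.ext (hS x), ← hker,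
    Submodule.finrank_map_subtype_eq]

end Involutions

section SwapMap

variable {V : Type} [AddCommGroup V] [Module ℂ V]

lemma swapMap_tmul (x : L) (a b : V) : swapMap L V (x ⊗ₜ (a ⊗ₜ b)) = x ⊗ₜ (b ⊗ₜ a) := rfl

lemma involutive_swapMap : Function.Involutive (swapMap L V) := by
  have : swapMap L V ∘ₗ swapMap L V = LinearMap.id :=
    TensorProduct.ext_threefold' fun x a b ↦ by simp [swapMap_tmul]
  exact LinearMap.congr_fun this

variable [LieRingModule L V] [LieModule ℂ L V]

lemma swapMap_lie (x : L) (w : L ⊗[ℂ] (V ⊗[ℂ] V)) :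
    swapMap L V ⁅x, w⁆ = ⁅x, swapMap L V w⁆ := by
  have : swapMap L V ∘ₗ toEnd ℂ L _ x = toEnd ℂ L _ x ∘ₗ swapMap L V :=
    TensorProduct.ext_threefold' fun y a b ↦ by
      simp [swapMap_tmul, TensorProduct.LieModule.lie_tmul_right, TensorProduct.tmul_add, add_comm]
  exact LinearMap.congr_fun this w

lemma swapMap_mem_maxTrivSubmodule :
    ∀ w ∈ (maxTrivSubmodule ℂ L (L ⊗[ℂ] (V ⊗[ℂ] V))).toSubmodule,
      swapMap L V w ∈ (maxTrivSubmodule ℂ L (L ⊗[ℂ] (V ⊗[ℂ] V))).toSubmodule :=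
  fun w hw x ↦ by rw [← swapMap_lie, hw x, map_zero]

variable (L V) in
/-- The action of the swap on the invariants of `adj(𝔤) ⊗ V ⊗ V`. -/
noncomputable def swapInvariants :
    maxTrivSubmodule ℂ L (L ⊗[ℂ] (V ⊗[ℂ] V)) →ₗ[ℂ] maxTrivSubmodule ℂ L (L ⊗[ℂ] (V ⊗[ℂ] V)) :=
  (swapMap L V).restrict swapMap_mem_maxTrivSubmodule

variable [FiniteDimensional ℂ L] [FiniteDimensional ℂ V]

lemma two_mul_finrank_symSquareInvariants :
    2 * (finrank ℂ (symSquareInvariants L V) : ℂ) =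
      finrank ℂ (maxTrivSubmodule ℂ L (L ⊗[ℂ] (V ⊗[ℂ] V))) +
        LinearMap.trace ℂ _ (swapInvariants L V) :=
  two_mul_finrank_inf_ker_sub_id involutive_swapMap swapMap_mem_maxTrivSubmodule

lemma two_mul_finrank_altSquareInvariants :
    2 * (finrank ℂ (altSquareInvariants L V) : ℂ) =
      finrank ℂ (maxTrivSubmodule ℂ L (L ⊗[ℂ] (V ⊗[ℂ] V))) -
        LinearMap.trace ℂ _ (swapInvariants L V) := by
  rw [altSquareInvariants, ← LinearMap.ker_neg, neg_add', sub_eq_add_neg _ (LinearMap.trace _ _ _),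
    ← map_neg]
  exact two_mul_finrank_inf_ker_sub_id (fun w ↦ by simp [involutive_swapMap w])
    fun w hw ↦ neg_mem (swapMap_mem_maxTrivSubmodule w hw)

end SwapMap

section CorootEvaluation

variable {V : Type} [AddCommGroup V] [Module ℂ V] {B : V →ₗ[ℂ] V →ₗ[ℂ] ℂ}

variable (L) in
/-- The bilinear form on `adj(𝔤) ⊗ V ⊗ V` induced by the Killing form and a form `B` on `V`. -/
noncomputable def tripleForm (B : V →ₗ[ℂ] V →ₗ[ℂ] ℂ) :
    L ⊗[ℂ] (V ⊗[ℂ] V) →ₗ[ℂ] L ⊗[ℂ] (V ⊗[ℂ] V) →ₗ[ℂ] ℂ :=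
  tensorPairing (killingForm ℂ L) (tensorPairing B B)

lemma bijective_tripleForm [FiniteDimensional ℂ L] [IsKilling ℂ L] [FiniteDimensional ℂ V]
    (hsep : B.SeparatingLeft) : Function.Bijective (tripleForm L B) :=
  have hkilling := bijective_of_separatingLeft (LinearMap.separatingLeft_iff_ker_eq_bot.mpr
    (IsKilling.ker_killingForm_eq_bot ℂ L))
  have hB := bijective_of_separatingLeft hsep
  bijective_tensorPairing hkilling (bijective_tensorPairing hB hB)

lemma tripleForm_swapMap (w m : L ⊗[ℂ] (V ⊗[ℂ] V)) :
    tripleForm L B (swapMap L V w) m = tripleForm L B w (swapMap L V m) := by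
  have : tripleForm L B ∘ₗ swapMap L V = LinearMap.lcomp ℂ ℂ (swapMap L V) ∘ₗ tripleForm L B :=
    TensorProduct.ext_threefold' fun x a b ↦ TensorProduct.ext_threefold' fun y c d ↦ by
      simp [tripleForm, swapMap_tmul, tensorPairing_tmul, mul_comm (B a _)]
  exact LinearMap.congr_fun₂ this w m

variable [LieRingModule L V] [LieModule ℂ L V]

lemma IsInvariantPairing.tripleForm (hB : IsInvariantPairing L B) :
    IsInvariantPairing L (tripleForm L B) :=
  isInvariantPairing_killingForm.tensor (hB.tensor hB)

variable {H : LieSubalgebra ℂ L} {r : ℕ}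

/-- The values of an invariant `w` of `adj(𝔤) ⊗ V ⊗ V`, viewed as a functional through `B`, at the
vectors `hc j ⊗ (v ⊗ u)` for the coroots `hc j` not orthogonal to `μ`. When `v` and `u` are a
highest and a lowest weight vector, these are coordinates on the space of invariants. -/
noncomputable def corootCoords (hc : Fin r → H) (μ : Module.Dual ℂ H) (B : V →ₗ[ℂ] V →ₗ[ℂ] ℂ)
    (v u : V) : maxTrivSubmodule ℂ L (L ⊗[ℂ] (V ⊗[ℂ] V)) →ₗ[ℂ] {j // μ (hc j) ≠ 0} → ℂ :=
  LinearMap.pi fun j ↦ (tripleForm L B).flip ((hc j : L) ⊗ₜ (v ⊗ₜ u)) ∘ₗ Submodule.subtype _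

variable {hc : Fin r → H} {μ : Module.Dual ℂ H} {v u : V}

lemma corootCoords_apply (w : maxTrivSubmodule ℂ L (L ⊗[ℂ] (V ⊗[ℂ] V))) (j : {j // μ (hc j) ≠ 0}) :
    corootCoords hc μ B v u w j = tripleForm L B w ((hc j : L) ⊗ₜ (v ⊗ₜ u)) := rfl

lemma corootCoords_swapInvariants (w : maxTrivSubmodule ℂ L (L ⊗[ℂ] (V ⊗[ℂ] V)))
    (j : {j // μ (hc j) ≠ 0}) :
    corootCoords hc μ B v u (swapInvariants L V w) j =
      tripleForm L B w ((hc j : L) ⊗ₜ (u ⊗ₜ v)) :=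
  tripleForm_swapMap _ _

variable [FiniteDimensional ℂ L] [IsKilling ℂ L] [H.IsCartanSubalgebra]
  {α ϖ : Fin r → Module.Dual ℂ H} [FiniteDimensional ℂ V]

namespace IsInvariantPairing

lemma exists_tripleForm_eq (hB : IsInvariantPairing L B) (hsep : B.SeparatingLeft)
    {θ : L ⊗[ℂ] (V ⊗[ℂ] V) →ₗ[ℂ] ℂ} (hθ : IsInvariantFunctional L θ) :
    ∃ w : maxTrivSubmodule ℂ L (L ⊗[ℂ] (V ⊗[ℂ] V)), AdjPaper.tripleForm L B w = θ := by
  obtain ⟨w, rfl⟩ := (bijective_tripleForm hsep).2 θ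
  exact ⟨⟨w, (hB.tripleForm.mem_maxTrivSubmodule_iff (bijective_tripleForm hsep).1).mpr hθ⟩, rfl⟩

variable [LieModule.IsIrreducible ℂ L V]

lemma injective_corootCoords (hB : IsInvariantPairing L B) (hsep : B.SeparatingLeft)
    (hα : IsBase H α) (hcoroot : ∀ j, IsCoroot H (α j) (hc j))
    (hϖ : ∀ j k, ϖ j (hc k) = if j = k then (1 : ℂ) else 0)
    (hv : IsHighestWeightVector H α μ v) (hu : IsHighestWeightVector H (-α) (-μ) u) :
    Function.Injective (corootCoords hc μ B v u) := by
  have hinj := (bijective_tripleForm (L := L) hsep).1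
  refine (injective_iff_map_eq_zero _).mpr fun w hw ↦ Subtype.ext (hinj ?_)
  rw [ZeroMemClass.coe_zero, map_zero]
  have hw' := (hB.tripleForm.mem_maxTrivSubmodule_iff hinj).mp w.2
  refine hw'.eq_zero_of_apply_coroot_eq_zero hα hϖ hv hu fun j ↦ ?_
  by_cases hj : μ (hc j) = 0
  · exact hw'.apply_coroot_eq_zero hα hcoroot hv hu hj
  · exact congrFun hw ⟨j, hj⟩

lemma finrank_maxTrivSubmodule_and_trace_swapInvariants (hB : IsInvariantPairing L B)
    (hsep : B.SeparatingLeft) (hα : IsBase H α) (hcoroot : ∀ j, IsCoroot H (α j) (hc j))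
    (hϖ : ∀ j k, ϖ j (hc k) = if j = k then (1 : ℂ) else 0)
    (hv : IsHighestWeightVector H α μ v) (hu : IsHighestWeightVector H (-α) (-μ) u)
    {ϖ' : Fin r → Module.Dual ℂ H} {z : ℂ}
    (hθ : ∀ j, μ (hc j) ≠ 0 → ∃ θ : L ⊗[ℂ] (V ⊗[ℂ] V) →ₗ[ℂ] ℂ, IsInvariantFunctional L θ ∧
      (∀ x : H, θ ((x : L) ⊗ₜ (v ⊗ₜ u)) = ϖ j x) ∧
      ∀ x : H, θ ((x : L) ⊗ₜ (u ⊗ₜ v)) = -z * ϖ' j x) :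
    (finrank ℂ (maxTrivSubmodule ℂ L (L ⊗[ℂ] (V ⊗[ℂ] V))) : ℂ) = ∑ j with μ (hc j) ≠ 0, 1 ∧
      LinearMap.trace ℂ _ (swapInvariants L V) = ∑ j with μ (hc j) ≠ 0, -z * ϖ' j (hc j) := by
  have hdual (j : {j // μ (hc j) ≠ 0}) : ∃ w, corootCoords hc μ B v u w = Pi.single j 1 ∧
      corootCoords hc μ B v u (swapInvariants L V w) j = -z * ϖ' j (hc j) := by
    obtain ⟨θ, hinv, hvu, huv⟩ := hθ j j.2
    obtain ⟨w, hw⟩ := hB.exists_tripleForm_eq hsep hinv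
    refine ⟨w, ?_, by rw [corootCoords_swapInvariants, hw, huv]⟩
    ext k
    simp [corootCoords_apply, hw, hvu, hϖ, Pi.single_apply, Subtype.ext_iff, eq_comm]
  choose w hw hswap using hdual
  have hinj := hB.injective_corootCoords hsep hα hcoroot hϖ hv hu
  have hsum (g : Fin r → ℂ) : ∑ j with μ (hc j) ≠ 0, g j = ∑ j : {j // μ (hc j) ≠ 0}, g j :=
    Finset.sum_subtype _ (by simp) g
  rw [hsum, hsum]
  constructor
  · rw [(LinearEquiv.ofBijective _ (bijective_of_apply_eq_piSingle hinj hw)).finrank_eq,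
      finrank_fintype_fun_eq_card, Fintype.card, Finset.sum_const, nsmul_one]
  · simp only [trace_eq_sum_of_apply_eq_piSingle hinj hw, hswap]

end IsInvariantPairing

end CorootEvaluation

section SquareInvariants

variable [FiniteDimensional ℂ L] [IsKilling ℂ L]
variable {H : LieSubalgebra ℂ L} [H.IsCartanSubalgebra] {r : ℕ} {α ϖ : Fin r → Module.Dual ℂ H}
  {hc : Fin r → H}
variable {V : Type} [AddCommGroup V] [Module ℂ V] [LieRingModule L V] [LieModule ℂ L V]
  [LieModule.IsIrreducible ℂ L V] {μ : Module.Dual ℂ H} {v u : V} {B : V →ₗ[ℂ] V →ₗ[ℂ] ℂ}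

lemma IsInvariantPairing.exists_flip_eq_smul (hB : IsInvariantPairing L B)
    (hsep : B.SeparatingLeft) (hα : IsBase H α) {l : Module.Dual ℂ H}
    (hv : IsHighestWeightVector H α μ v) (hu : IsHighestWeightVector H (-α) l u) :
    ∃ z : ℂ, B.flip = z • B ∧ 1 - z = (if IsSymplecticRep (L := L) V then 2 else 0) ∧
      1 + z = if IsOrthogonalRep (L := L) V then 2 else 0 := by
  have hB0 := hv.ne_zero_of_separatingLeft hsep
  have hne : B ≠ -B := fun h ↦ hB0 <| by simpa [← two_smul ℂ] using eq_neg_iff_add_eq_zero.mp h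
  rw [hB.isSymplecticRep_iff hsep hα hv hu, hB.isOrthogonalRep_iff hsep hα hv hu]
  rcases hB.flip_eq_or_eq_neg hB0 hα hv hu with h | h
  · exact ⟨1, by simp [h], by simp [h, hne], by norm_num [h]⟩
  · exact ⟨-1, h.trans (neg_one_smul ℂ B).symm, by norm_num [h], by simp [h, hne.symm]⟩

variable [FiniteDimensional ℂ V] {F : Fin r → Type} [∀ j, AddCommGroup (F j)]
  [∀ j, Module ℂ (F j)] [∀ j, LieRingModule L (F j)] [∀ j, LieModule ℂ L (F j)]
  [∀ j, FiniteDimensional ℂ (F j)] {σ : Fin r → Fin r}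

lemma IsDomInt.exists_isInvariantFunctional (hμ : IsDomInt hc μ) (hα : IsBase H α)
    (hcoroot : ∀ j, IsCoroot H (α j) (hc j))
    (hϖ : ∀ j k, ϖ j (hc k) = if j = k then (1 : ℂ) else 0)
    (hF : ∀ j, IsHWIrrep H α (ϖ j) (F j)) (hσ : ∀ j, IsDualPair (L := L) (F (σ j)) (F j))
    (hv : IsHighestWeightVector H α μ v) (hu : IsHighestWeightVector H (-α) (-μ) u)
    (hB : IsInvariantPairing L B) (hB0 : B ≠ 0) {z : ℂ} (hz : B.flip = z • B) {j : Fin r}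
    (hj : μ (hc j) ≠ 0) :
    ∃ θ : L ⊗[ℂ] (V ⊗[ℂ] V) →ₗ[ℂ] ℂ, IsInvariantFunctional L θ ∧
      (∀ x : H, θ ((x : L) ⊗ₜ (v ⊗ₜ u)) = ϖ j x) ∧
      ∀ x : H, θ ((x : L) ⊗ₜ (u ⊗ₜ v)) = -z * ϖ (σ j) x := by
  have (k : Fin r) : LieModule.IsIrreducible ℂ L (F k) := (hF k).1
  obtain ⟨w, hw⟩ := (hF (σ j)).exists_isHighestWeightVector
  obtain ⟨s, hs⟩ := (hσ j).exists_isHighestWeightVector_neg hα hw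
  obtain ⟨T, _, _, _, _, _, ρ, l, t, s', h⟩ :=
    exists_hasExtremalEigenvectors hα hF (hμ.sub_mem_closure hα hϖ hj) hs
  rw [add_sub_cancel] at h
  exact h.exists_isInvariantFunctional hα hcoroot hv hu hB hB0 hz

lemma two_mul_finrank_squareInvariants (hμ : IsDomInt hc μ) (hα : IsBase H α)
    (hcoroot : ∀ j, IsCoroot H (α j) (hc j))
    (hϖ : ∀ j k, ϖ j (hc k) = if j = k then (1 : ℂ) else 0)
    (hF : ∀ j, IsHWIrrep H α (ϖ j) (F j)) (hσ : ∀ j, IsDualPair (L := L) (F (σ j)) (F j))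
    (hv : IsHighestWeightVector H α μ v) (hu : IsHighestWeightVector H (-α) (-μ) u)
    (hB : IsInvariantPairing L B) (hsep : B.SeparatingLeft) {z : ℂ} (hz : B.flip = z • B) :
    2 * (finrank ℂ (symSquareInvariants L V) : ℂ) =
        ∑ j with μ (hc j) ≠ 0, (1 + -z * ϖ (σ j) (hc j)) ∧
      2 * (finrank ℂ (altSquareInvariants L V) : ℂ) =
        ∑ j with μ (hc j) ≠ 0, (1 + z * ϖ (σ j) (hc j)) := by
  have hB0 := hv.ne_zero_of_separatingLeft hsep
  obtain ⟨hdim, htr⟩ := hB.finrank_maxTrivSubmodule_and_trace_swapInvariants hsep hα hcoroot hϖ hv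
    hu fun j hj ↦ hμ.exists_isInvariantFunctional hα hcoroot hϖ hF hσ hv hu hB hB0 hz hj
  rw [two_mul_finrank_symSquareInvariants, two_mul_finrank_altSquareInvariants, hdim, htr,
    ← Finset.sum_add_distrib, ← Finset.sum_sub_distrib]
  simp only [neg_mul, sub_neg_eq_add, and_self]

end SquareInvariants

lemma apply_coroot_eq_ite_eq {H : LieSubalgebra ℂ L} {r : ℕ} {ϖ : Fin r → Module.Dual ℂ H}
    {hc : Fin r → H} (hϖ : ∀ j k, ϖ j (hc k) = if j = k then (1 : ℂ) else 0) (i j : Fin r) :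
    ϖ i (hc j) = if ϖ i = ϖ j then 1 else 0 := by
  have : ϖ i = ϖ j ↔ i = j :=
    ⟨fun h ↦ by simpa [hϖ] using LinearMap.congr_fun h (hc j), congrArg ϖ⟩
  simp only [hϖ, this]

lemma natCast_eq_sum_of_two_mul_eq {ι X : Type*} {s : Finset ι} {a b : ι → X} {P : Prop} {n : ℕ}
    {ε : ℂ} (hε : 1 + ε = if P then 2 else 0)
    (hn : 2 * (n : ℂ) = ∑ j ∈ s, (1 + ε * if a j = b j then 1 else 0)) :
    (n : ℚ) = ∑ j ∈ s, ((if a j ≠ b j then (1 : ℚ) / 2 else 0) +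
      (if a j = b j ∧ P then (1 : ℚ) else 0)) := by
  have hterm (j : ι) : (1 + ε * if a j = b j then 1 else 0) =
      2 * (((if a j ≠ b j then (1 : ℚ) / 2 else 0) + (if a j = b j ∧ P then (1 : ℚ) else 0) : ℚ) :
        ℂ) := by
    by_cases hj : a j = b j <;> by_cases P <;> simp_all
  rw [Finset.sum_congr rfl fun j _ ↦ hterm j, ← Finset.mul_sum, mul_right_inj' two_ne_zero] at hn
  exact_mod_cast hn

/-- Suppose `μ = μ̄` (witnessed by a perfect invariant self-pairing of
`V_μ`).  The fundamental representations are `F j`, of highest weight `ϖ j`, and the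
opposition involution on fundamental weights is `ϖ̄_j = ϖ (σ j)`, witnessed by perfect
invariant pairings between `F (σ j)` and `F j`.  Then the dimensions of the `𝔤`-invariant
subspaces of `adj(𝔤) ⊗ S²V_μ` and `adj(𝔤) ⊗ Λ²V_μ` are given by the sums over the indices
`j` with `⟨μ, α_j∨⟩ > 0` of `(1/2)·[ϖ_j ≠ ϖ̄_j] + [ϖ_j = ϖ̄_j]·[V_μ symplectic]`,
respectively `(1/2)·[ϖ_j ≠ ϖ̄_j] + [ϖ_j = ϖ̄_j]·[V_μ orthogonal]`. -/
theorem statement8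
    {L : Type} [LieRing L] [LieAlgebra ℂ L] [FiniteDimensional ℂ L]
    [LieAlgebra.IsSemisimple ℂ L]
    (H : LieSubalgebra ℂ L) [H.IsCartanSubalgebra]
    {r : ℕ} (α : Fin r → Module.Dual ℂ H) (hc : Fin r → H)
    (hbase : IsBase H α) (hcoroot : ∀ j, IsCoroot H (α j) (hc j))
    (ϖ : Fin r → Module.Dual ℂ H)
    (hϖ : ∀ j k, ϖ j (hc k) = if j = k then (1 : ℂ) else 0)
    (F : Fin r → Type) [∀ j, AddCommGroup (F j)] [∀ j, Module ℂ (F j)]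
    [∀ j, LieRingModule L (F j)] [∀ j, LieModule ℂ L (F j)] [∀ j, FiniteDimensional ℂ (F j)]
    (hF : ∀ j, IsHWIrrep H α (ϖ j) (F j))
    (σ : Fin r → Fin r) (hσ : ∀ j, IsDualPair (L := L) (F (σ j)) (F j))
    (μ : Module.Dual ℂ H) (hμ : IsDomInt hc μ)
    (Vμ : Type) [AddCommGroup Vμ] [Module ℂ Vμ] [LieRingModule L Vμ]
    [LieModule ℂ L Vμ] [FiniteDimensional ℂ Vμ]
    (hVμ : IsHWIrrep H α μ Vμ)
    (hselfdual : IsDualPair (L := L) Vμ Vμ) :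
    (Module.finrank ℂ (symSquareInvariants L Vμ) : ℚ) =
      ∑ j ∈ Finset.univ.filter (fun j => μ (hc j) ≠ 0),
        ((if ϖ (σ j) ≠ ϖ j then (1 : ℚ)/2 else 0) +
          (if ϖ (σ j) = ϖ j ∧ IsSymplecticRep (L := L) Vμ then (1 : ℚ) else 0)) ∧
    (Module.finrank ℂ (altSquareInvariants L Vμ) : ℚ) =
      ∑ j ∈ Finset.univ.filter (fun j => μ (hc j) ≠ 0),
        ((if ϖ (σ j) ≠ ϖ j then (1 : ℚ)/2 else 0) +
          (if ϖ (σ j) = ϖ j ∧ IsOrthogonalRep (L := L) Vμ then (1 : ℚ) else 0)) := by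
  have : LieModule.IsIrreducible ℂ L Vμ := hVμ.1
  obtain ⟨v, hv⟩ := hVμ.exists_isHighestWeightVector
  obtain ⟨u, hu⟩ := hselfdual.exists_isHighestWeightVector_neg hbase hv
  obtain ⟨B, hsep, -, hB⟩ := hselfdual
  obtain ⟨z, hz, hsymplectic, horthogonal⟩ :=
    IsInvariantPairing.exists_flip_eq_smul hB hsep hbase hv hu
  obtain ⟨hsym, halt⟩ :=
    two_mul_finrank_squareInvariants hμ hbase hcoroot hϖ hF hσ hv hu hB hsep hz
  simp only [apply_coroot_eq_ite_eq hϖ (σ _)] at hsym halt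
  exact ⟨natCast_eq_sum_of_two_mul_eq hsymplectic hsym,
    natCast_eq_sum_of_two_mul_eq horthogonal halt⟩

end AdjPaper
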